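/- arXiv:1607.07397 — 9 statements merged into one kernel-verified Lean document; each statement's English description precedes it below -/
import Mathlib

section
/- Let η ∈ ℤ≥0, let r : ℂ → ℂ be analytic at 0, and let f be a function meromorphic at 0 that satisfies the Riccati equation f'(t) + f(t)² + f(t)(−η/t + r(t)) = 0 for all t in some punctured neighbourhood of 0. Then exactly one of the following holds: (i) f is analytic at 0, and there exists a function h analytic at 0 such that f(t) = t^η · h(t) for all t in a neighbourhood of 0 and h satisfies the regularised Riccati equation h'(t) + t^η h(t)² + h(t) r(t) = 0 on a neighbourhood of 0; or (ii) f has a simple pole at 0 with residue η + 1, i.e. there exists a function k analytic at 0 such that f(t) = (η+1)/t + k(t) for all t in a punctured neighbourhood of 0. -/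
open Filter Topology

/-!
Divide the Riccati equation by `f`: away from the zero solution it reads `f = η / t - r - f' / f`.
If `f` has order `n` at `0`, then `f' / f = n / t + (analytic)`, so `f = (η - n) / t + k`.
The remainder `k` is meromorphic because `f` is, and continuous because `r` is, hence analytic.
So either `n = η`, or `f` has a simple pole, which forces `n = -1` and the residue `η + 1`.
-/

section Order

variable {𝕜 E : Type*} [NontriviallyNormedField 𝕜] [NormedAddCommGroup E] [NormedSpace 𝕜 E]
  {x : 𝕜} {n : ℤ}

theorem exists_analyticAt_eq_zpow_smul_of_le_meromorphicOrderAt {f : 𝕜 → E}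
    (hf : MeromorphicAt f x) (hn : n ≤ meromorphicOrderAt f x) :
    ∃ g : 𝕜 → E, AnalyticAt 𝕜 g x ∧ ∀ᶠ t in 𝓝[≠] x, f t = (t - x) ^ n • g t := by
  cases hm : meromorphicOrderAt f x with
  | top => exact ⟨0, analyticAt_const, by simpa using meromorphicOrderAt_eq_top_iff.mp hm⟩
  | coe m =>
    have hnm : n ≤ m := by simpa [hm] using hn
    obtain ⟨g, hg, -, hfg⟩ := (meromorphicOrderAt_eq_int_iff hf).mp hm
    refine ⟨fun t ↦ (t - x) ^ (m - n) • g t,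
      (AnalyticAt.zpow_nonneg (by fun_prop) (sub_nonneg.mpr hnm)).smul hg, ?_⟩
    filter_upwards [hfg, self_mem_nhdsWithin] with t hft ht
    rw [hft, smul_smul, ← zpow_add₀ (sub_ne_zero.mpr ht), add_sub_cancel]

theorem meromorphicOrderAt_eq_neg_one_of_eq_div_add {f k : 𝕜 → 𝕜} {c : 𝕜} (hc : c ≠ 0)
    (hk : AnalyticAt 𝕜 k x) (hf : ∀ᶠ t in 𝓝[≠] x, f t = c / (t - x) + k t) :
    meromorphicOrderAt f x = -1 := by
  have hmero : MeromorphicAt f x :=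
    MeromorphicAt.congr (f := fun t ↦ c / (t - x) + k t) (by fun_prop) (EventuallyEq.symm hf)
  refine (meromorphicOrderAt_eq_int_iff (n := -1) hmero).mpr
    ⟨fun t ↦ c + (t - x) * k t, by fun_prop, by simpa using hc, ?_⟩
  filter_upwards [hf, self_mem_nhdsWithin] with t hft ht
  have : t - x ≠ 0 := sub_ne_zero.mpr ht
  rw [hft, zpow_neg_one, smul_eq_mul]
  field_simp

theorem exists_analyticAt_logDeriv_eq_div_add [CompleteSpace 𝕜] {f : 𝕜 → 𝕜}
    (hf : MeromorphicAt f x) (hn : meromorphicOrderAt f x = n) :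
    ∃ q : 𝕜 → 𝕜, AnalyticAt 𝕜 q x ∧ ∀ᶠ t in 𝓝[≠] x, logDeriv f t = n / (t - x) + q t := by
  obtain ⟨g, hg, hgx, hfg⟩ := (meromorphicOrderAt_eq_int_iff hf).mp hn
  refine ⟨logDeriv g, hg.deriv.div hg hgx, ?_⟩
  filter_upwards [logDeriv_congr_nhdsNE hfg, self_mem_nhdsWithin,
    hg.eventually_analyticAt.filter_mono nhdsWithin_le_nhds,
    (hg.continuousAt.eventually_ne hgx).filter_mono nhdsWithin_le_nhds] with t hft ht hgt hgt0
  have htx : t - x ≠ 0 := sub_ne_zero.mpr ht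
  have hzpow : DifferentiableAt 𝕜 (fun z ↦ (z - x) ^ n) t := by fun_prop (disch := grind)
  simp only [smul_eq_mul] at hft
  rw [hft, logDeriv_mul (f := fun z ↦ (z - x) ^ n) t (zpow_ne_zero n htx) hgt0 hzpow
      hgt.differentiableAt,
    logDeriv_fun_zpow (by fun_prop), logDeriv_apply (fun z ↦ z - x), deriv_sub_const, deriv_id'',
    mul_one_div]

end Order

section Riccati

variable {𝕜 : Type*} [NontriviallyNormedField 𝕜]

/-- `f` solves the Riccati equation `f' + f² + f (-η / t + r) = 0` on a punctured neighbourhood of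
`0`. The parameter `η` may be any scalar. -/
def IsRiccatiSolution (η : 𝕜) (r f : 𝕜 → 𝕜) : Prop :=
  ∀ᶠ t in 𝓝[≠] (0 : 𝕜), deriv f t + f t ^ 2 + f t * (-η / t + r t) = 0

/-- `h` solves the regularised Riccati equation `h' + t ^ η h² + h r = 0` on a full neighbourhood of
`0`; it is the equation for `h` when `t ^ η h` solves the Riccati equation. -/
def IsRegularisedRiccatiSolution (η : ℕ) (r h : 𝕜 → 𝕜) : Prop :=
  ∀ᶠ t in 𝓝 (0 : 𝕜), deriv h t + t ^ η * h t ^ 2 + h t * r t = 0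

namespace IsRiccatiSolution

variable {r f : 𝕜 → 𝕜}

theorem eventually_eq_sub_logDeriv {η : 𝕜} (hRic : IsRiccatiSolution η r f)
    (hf : ∀ᶠ t in 𝓝[≠] 0, f t ≠ 0) :
    ∀ᶠ t in 𝓝[≠] 0, f t = η / t - r t - logDeriv f t := by
  filter_upwards [hRic, hf] with t hRict hft
  rw [logDeriv_apply, eq_sub_iff_add_eq, ← eq_sub_iff_add_eq', div_eq_iff hft]
  linear_combination hRict

variable [CompleteSpace 𝕜]

theorem exists_analyticAt_eq_div_add {η : 𝕜} {n : ℤ} (hRic : IsRiccatiSolution η r f)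
    (hr : ContinuousAt r 0) (hf : MeromorphicAt f 0) (hn : meromorphicOrderAt f 0 = n) :
    ∃ k : 𝕜 → 𝕜, AnalyticAt 𝕜 k 0 ∧ ∀ᶠ t in 𝓝[≠] 0, f t = (η - n) / t + k t := by
  obtain ⟨q, hq, hfq⟩ := exists_analyticAt_logDeriv_eq_div_add hf hn
  have hf0 : ∀ᶠ t in 𝓝[≠] 0, f t ≠ 0 :=
    (meromorphicOrderAt_ne_top_iff_eventually_ne_zero hf).mp (by simp [hn])
  have hfk : ∀ᶠ t in 𝓝[≠] 0, f t = (η - n) / t + (-r t - q t) := by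
    filter_upwards [hRic.eventually_eq_sub_logDeriv hf0, hfq] with t hft hfqt
    rw [hft, hfqt, sub_zero]
    ring
  have hk_mero : MeromorphicAt (fun t ↦ -r t - q t) 0 := by
    refine MeromorphicAt.congr (f := fun t ↦ f t - (η - n) / t) (by fun_prop) ?_
    filter_upwards [hfk] with t hft
    rw [hft, add_sub_cancel_left]
  exact ⟨_, hk_mero.analyticAt (hr.neg.sub hq.continuousAt), hfk⟩

theorem meromorphicOrderAt_eq_top_or_eq_or_eq_neg_one [CharZero 𝕜] {η : ℤ}
    (hRic : IsRiccatiSolution (η : 𝕜) r f) (hr : ContinuousAt r 0) (hf : MeromorphicAt f 0) :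
    meromorphicOrderAt f 0 = ⊤ ∨ meromorphicOrderAt f 0 = η ∨ meromorphicOrderAt f 0 = -1 := by
  cases hn : meromorphicOrderAt f 0 with
  | top => exact .inl rfl
  | coe n =>
    obtain rfl | hηn := eq_or_ne n η
    · exact .inr (.inl rfl)
    · obtain ⟨k, hk, hfk⟩ := hRic.exists_analyticAt_eq_div_add hr hf hn
      have hresidue : (η : 𝕜) - n ≠ 0 := sub_ne_zero.mpr (Int.cast_injective.ne hηn.symm)
      rw [← hn]
      exact .inr (.inr
        (meromorphicOrderAt_eq_neg_one_of_eq_div_add hresidue hk (by simpa using hfk)))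

theorem isRegularisedRiccatiSolution {η : ℕ} {h : 𝕜 → 𝕜} (hRic : IsRiccatiSolution (η : 𝕜) r f)
    (hr : ContinuousAt r 0) (hh : AnalyticAt 𝕜 h 0) (hfh : ∀ᶠ t in 𝓝[≠] 0, f t = t ^ η * h t) :
    IsRegularisedRiccatiSolution η r h := by
  have hh_cont := hh.continuousAt
  have hh'_cont := hh.deriv.continuousAt
  refine (ContinuousAt.eventuallyEq_nhds_iff_eventuallyEq_nhdsNE
    (g := fun _ ↦ 0) (by fun_prop) continuousAt_const).mp ?_
  filter_upwards [hRic, hfh, EventuallyEq.nhdsNE_deriv hfh, self_mem_nhdsWithin,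
    hh.eventually_analyticAt.filter_mono nhdsWithin_le_nhds] with t hRict hft hf't ht hht
  have ht0 : t ≠ 0 := ht
  have hderiv : deriv f t = η / t * t ^ η * h t + t ^ η * deriv h t := by
    rw [hf't, deriv_fun_mul (by fun_prop) hht.differentiableAt, ← logDeriv_pow, logDeriv_apply,
      div_mul_cancel₀ _ (pow_ne_zero η ht0)]
  rw [hderiv, hft] at hRict
  refine (mul_eq_zero_iff_left (pow_ne_zero η ht0)).mp ?_
  linear_combination hRict

theorem exists_isRegularisedRiccatiSolution {η : ℕ} (hRic : IsRiccatiSolution (η : 𝕜) r f)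
    (hr : ContinuousAt r 0) (hf : MeromorphicAt f 0) (hη : (η : ℤ) ≤ meromorphicOrderAt f 0) :
    ∃ h : 𝕜 → 𝕜, AnalyticAt 𝕜 h 0 ∧ (∀ᶠ t in 𝓝[≠] 0, f t = t ^ η * h t) ∧
      IsRegularisedRiccatiSolution η r h := by
  obtain ⟨h, hh, hfh⟩ := exists_analyticAt_eq_zpow_smul_of_le_meromorphicOrderAt hf hη
  simp only [sub_zero, zpow_natCast, smul_eq_mul] at hfh
  exact ⟨h, hh, hfh, hRic.isRegularisedRiccatiSolution hr hh hfh⟩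

end IsRiccatiSolution

end Riccati

theorem stmt_0_general {𝕜 : Type*} [NontriviallyNormedField 𝕜] [CompleteSpace 𝕜] [CharZero 𝕜]
    (η : ℕ) (r f : 𝕜 → 𝕜) (hr : ContinuousAt r 0) (hf : MeromorphicAt f 0)
    (hRic : IsRiccatiSolution (η : 𝕜) r f) :
    Xor
      ((∃ g : 𝕜 → 𝕜, AnalyticAt 𝕜 g 0 ∧ ∀ᶠ t in 𝓝[≠] (0 : 𝕜), f t = g t) ∧
        ∃ h : 𝕜 → 𝕜, AnalyticAt 𝕜 h 0 ∧ (∀ᶠ t in 𝓝[≠] (0 : 𝕜), f t = t ^ η * h t) ∧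
          IsRegularisedRiccatiSolution η r h)
      (∃ k : 𝕜 → 𝕜, AnalyticAt 𝕜 k 0 ∧
        ∀ᶠ t in 𝓝[≠] (0 : 𝕜), f t = ((η : 𝕜) + 1) / t + k t) := by
  refine (xor_iff_or_and_not_and _ _).mpr ⟨?_, ?_⟩
  · by_cases hη : ((η : ℤ) : WithTop ℤ) ≤ meromorphicOrderAt f 0
    · obtain ⟨h, hh, hfh, hreg⟩ := hRic.exists_isRegularisedRiccatiSolution hr hf hη
      exact .inl ⟨⟨fun t ↦ t ^ η * h t, by fun_prop, hfh⟩, h, hh, hfh, hreg⟩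
    · have hpole : meromorphicOrderAt f 0 = (-1 : ℤ) := by
        have hRicInt : IsRiccatiSolution ((η : ℤ) : 𝕜) r f := by simpa using hRic
        rcases hRicInt.meromorphicOrderAt_eq_top_or_eq_or_eq_neg_one hr hf with
          htop | heq | hneg
        · simp [htop] at hη
        · exact absurd heq.ge hη
        · exact hneg
      exact .inr (by simpa using hRic.exists_analyticAt_eq_div_add hr hf hpole)
  · rintro ⟨⟨⟨g, hg, hfg⟩, -⟩, k, hk, hfk⟩
    have hpole : meromorphicOrderAt f 0 = -1 :=
      meromorphicOrderAt_eq_neg_one_of_eq_div_add η.cast_add_one_ne_zero hk (by simpa using hfk)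
    have hnonneg := (hf.meromorphicOrderAt_nonneg_iff).mpr ⟨g, hg, hfg⟩
    exact absurd (hpole ▸ hnonneg) (by decide)

/-- dichotomy for meromorphic solutions of the Riccati equation
`f' + f² + f·(−η/t + r) = 0` at the origin. -/
theorem stmt_0 (η : ℕ) (r f : ℂ → ℂ)
    (hr : AnalyticAt ℂ r 0) (hf : MeromorphicAt f 0)
    (hRic : ∀ᶠ t in 𝓝[≠] (0 : ℂ),
      deriv f t + f t ^ 2 + f t * (-(η : ℂ) / t + r t) = 0) :
    Xor'
      -- (i) `f` is analytic at 0, of the form `t^η · h(t)` with `h` solving the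
      -- regularised Riccati equation
      ((∃ g : ℂ → ℂ, AnalyticAt ℂ g 0 ∧ ∀ᶠ t in 𝓝[≠] (0 : ℂ), f t = g t) ∧
        ∃ h : ℂ → ℂ, AnalyticAt ℂ h 0 ∧
          (∀ᶠ t in 𝓝[≠] (0 : ℂ), f t = t ^ η * h t) ∧
          (∀ᶠ t in 𝓝 (0 : ℂ), deriv h t + t ^ η * h t ^ 2 + h t * r t = 0))
      -- (ii) `f` has a simple pole at 0 with residue `η + 1`
      (∃ k : ℂ → ℂ, AnalyticAt ℂ k 0 ∧
        ∀ᶠ t in 𝓝[≠] (0 : ℂ), f t = ((η : ℂ) + 1) / t + k t) :=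
  stmt_0_general η r f hr.continuousAt hf hRic
end

section
/- Let η ∈ ℤ≥0 and let r : ℂ → ℂ be analytic at 0. There is at most one singular solution of the Riccati equation at 0: if f₁ and f₂ are both meromorphic at 0, both have a pole at 0, and both satisfy f'(t) + f(t)² + f(t)(−η/t + r(t)) = 0 on a punctured neighbourhood of 0, then f₁(t) = f₂(t) for all t in some punctured neighbourhood of 0. -/
open Filter Topology

/-!
Inversion linearizes the Riccati equation: if `f' + f² + f p = 0`, then `(1/f)' = 1 + p (1/f)`.
Hence `w = 1/f₁ - 1/f₂` satisfies `w' = p w`, and `w` vanishes at the common pole. If `w` were not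
identically zero, `p` would be its logarithmic derivative and so would have residue equal to the
order of the zero of `w`, a positive integer. But here `p = -η/t + r` has residue `-η ≤ 0`.
-/

section

variable {𝕜 : Type*} [NontriviallyNormedField 𝕜] {x : 𝕜}

theorem tendsto_sub_mul_div_sub_add {r : 𝕜 → 𝕜} {b : 𝕜} (a : 𝕜)
    (hr : Tendsto r (𝓝[≠] x) (𝓝 b)) :
    Tendsto (fun t => (t - x) * (a / (t - x) + r t)) (𝓝[≠] x) (𝓝 a) := by
  have hsub : Tendsto (fun t => t - x) (𝓝[≠] x) (𝓝 0) :=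
    tendsto_sub_nhds_zero_iff.mpr (tendsto_id.mono_left nhdsWithin_le_nhds)
  have hlim : Tendsto (fun t => a + (t - x) * r t) (𝓝[≠] x) (𝓝 a) := by
    simpa using (hsub.mul hr).const_add a
  refine hlim.congr' ?_
  filter_upwards [eventually_mem_nhdsWithin] with t ht
  rw [mul_add, mul_div_cancel₀ a (sub_ne_zero.mpr ht)]

theorem hasDerivAt_inv_of_riccati {f : 𝕜 → 𝕜} {f' p t : 𝕜} (hf : HasDerivAt f f' t)
    (hft : f t ≠ 0) (hRic : f' + f t ^ 2 + f t * p = 0) :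
    HasDerivAt f⁻¹ (1 + p * (f t)⁻¹) t := by
  have hvalue : -f' / f t ^ 2 = 1 + p * (f t)⁻¹ := by
    field_simp
    linear_combination -hRic
  exact hvalue ▸ hf.inv hft

variable [CompleteSpace 𝕜]

theorem tendsto_sub_mul_logDeriv_of_meromorphicOrderAt_eq {f : 𝕜 → 𝕜} {n : ℤ}
    (hf : MeromorphicAt f x) (hn : meromorphicOrderAt f x = n) :
    Tendsto (fun t => (t - x) * logDeriv f t) (𝓝[≠] x) (𝓝 n) := by
  obtain ⟨g, hg, hgx, hfg⟩ := (meromorphicOrderAt_eq_int_iff hf).mp hn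
  have hlim : Tendsto (fun t => (t - x) * (n / (t - x) + logDeriv g t)) (𝓝[≠] x) (𝓝 n) :=
    tendsto_sub_mul_div_sub_add _
      ((hg.deriv.continuousAt.div hg.continuousAt hgx).tendsto.mono_left nhdsWithin_le_nhds)
  refine hlim.congr' ?_
  filter_upwards [eventually_mem_nhdsWithin, logDeriv_congr_nhdsNE hfg,
    hg.eventually_analyticAt.filter_mono nhdsWithin_le_nhds,
    (hg.continuousAt.eventually_ne hgx).filter_mono nhdsWithin_le_nhds] with t htx hlog hgt hgt0
  have hsub : t - x ≠ 0 := sub_ne_zero.mpr htx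
  have hzpow : DifferentiableAt 𝕜 (fun z => (z - x) ^ n) t :=
    DifferentiableAt.zpow (by fun_prop) (Or.inl hsub)
  simp only [smul_eq_mul] at hlog
  rw [hlog, logDeriv_mul (f := fun z => (z - x) ^ n) t (zpow_ne_zero n hsub) hgt0 hzpow
    hgt.differentiableAt, logDeriv_fun_zpow (by fun_prop)]
  simp [logDeriv_apply, div_eq_mul_inv]

theorem eventually_eq_zero_of_deriv_eq_mul {w p : 𝕜 → 𝕜} {c : 𝕜} (hw : MeromorphicAt w x)
    (hw0 : Tendsto w (𝓝[≠] x) (𝓝 0)) (hderiv : ∀ᶠ t in 𝓝[≠] x, deriv w t = p t * w t)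
    (hp : Tendsto (fun t => (t - x) * p t) (𝓝[≠] x) (𝓝 c)) (hc : ∀ n : ℤ, 0 < n → c ≠ n) :
    ∀ᶠ t in 𝓝[≠] x, w t = 0 := by
  rw [← meromorphicOrderAt_eq_top_iff]
  by_contra htop
  obtain ⟨n, hn⟩ := WithTop.ne_top_iff_exists.mp htop
  have hn_pos : 0 < n := by
    exact_mod_cast hn ▸ (tendsto_zero_iff_meromorphicOrderAt_pos hw).mp hw0
  have hlog : ∀ᶠ t in 𝓝[≠] x, logDeriv w t = p t := by
    filter_upwards [hderiv, (meromorphicOrderAt_ne_top_iff_eventually_ne_zero hw).mp htop]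
      with t hdt hwt
    rw [logDeriv_apply, hdt, mul_div_cancel_right₀ _ hwt]
  have hpn : Tendsto (fun t => (t - x) * p t) (𝓝[≠] x) (𝓝 n) :=
    (tendsto_sub_mul_logDeriv_of_meromorphicOrderAt_eq hw hn.symm).congr'
      (hlog.mono fun t ht => by rw [ht])
  exact hc n hn_pos (tendsto_nhds_unique hp hpn)

theorem eventually_hasDerivAt_inv_of_riccati {f p : 𝕜 → 𝕜} (hf : MeromorphicAt f x)
    (hpole : Tendsto (fun t => ‖f t‖) (𝓝[≠] x) atTop)
    (hRic : ∀ᶠ t in 𝓝[≠] x, deriv f t + f t ^ 2 + f t * p t = 0) :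
    ∀ᶠ t in 𝓝[≠] x, HasDerivAt f⁻¹ (1 + p t * (f t)⁻¹) t := by
  filter_upwards [hRic, hf.eventually_analyticAt, hpole.eventually_gt_atTop 0] with t hRt hft hpos
  exact hasDerivAt_inv_of_riccati hft.differentiableAt.hasDerivAt (norm_pos_iff.mp hpos) hRt

theorem stmt_1_general {p f₁ f₂ : 𝕜 → 𝕜} {c : 𝕜}
    (hp : Tendsto (fun t => (t - x) * p t) (𝓝[≠] x) (𝓝 c)) (hc : ∀ n : ℤ, 0 < n → c ≠ n)
    (hf₁ : MeromorphicAt f₁ x) (hf₂ : MeromorphicAt f₂ x)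
    (hpole₁ : Tendsto (fun t => ‖f₁ t‖) (𝓝[≠] x) atTop)
    (hpole₂ : Tendsto (fun t => ‖f₂ t‖) (𝓝[≠] x) atTop)
    (hRic₁ : ∀ᶠ t in 𝓝[≠] x, deriv f₁ t + f₁ t ^ 2 + f₁ t * p t = 0)
    (hRic₂ : ∀ᶠ t in 𝓝[≠] x, deriv f₂ t + f₂ t ^ 2 + f₂ t * p t = 0) :
    ∀ᶠ t in 𝓝[≠] x, f₁ t = f₂ t := by
  have hw0 : Tendsto (f₁⁻¹ - f₂⁻¹) (𝓝[≠] x) (𝓝 0) := by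
    rw [← sub_zero (0 : 𝕜)]
    exact (tendsto_inv₀_cobounded.comp (tendsto_norm_atTop_iff_cobounded.mp hpole₁)).sub
      (tendsto_inv₀_cobounded.comp (tendsto_norm_atTop_iff_cobounded.mp hpole₂))
  have hderiv : ∀ᶠ t in 𝓝[≠] x, deriv (f₁⁻¹ - f₂⁻¹) t = p t * (f₁⁻¹ - f₂⁻¹) t := by
    filter_upwards [eventually_hasDerivAt_inv_of_riccati hf₁ hpole₁ hRic₁,
      eventually_hasDerivAt_inv_of_riccati hf₂ hpole₂ hRic₂] with t h₁ h₂
    rw [(h₁.sub h₂).deriv, Pi.sub_apply, Pi.inv_apply, Pi.inv_apply]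
    ring
  filter_upwards [eventually_eq_zero_of_deriv_eq_mul (hf₁.inv.sub hf₂.inv) hw0 hderiv hp hc]
    with t ht
  exact inv_injective (sub_eq_zero.mp ht)

end

/-- uniqueness of the singular (pole at 0) solution of the Riccati
equation `f' + f² + f·(−η/t + r) = 0` at the origin. -/
theorem stmt_1 (η : ℕ) (r f₁ f₂ : ℂ → ℂ)
    (hr : AnalyticAt ℂ r 0)
    (hf₁ : MeromorphicAt f₁ 0) (hf₂ : MeromorphicAt f₂ 0)
    (hpole₁ : Tendsto (fun t => ‖f₁ t‖) (𝓝[≠] (0 : ℂ)) atTop)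
    (hpole₂ : Tendsto (fun t => ‖f₂ t‖) (𝓝[≠] (0 : ℂ)) atTop)
    (hRic₁ : ∀ᶠ t in 𝓝[≠] (0 : ℂ),
      deriv f₁ t + f₁ t ^ 2 + f₁ t * (-(η : ℂ) / t + r t) = 0)
    (hRic₂ : ∀ᶠ t in 𝓝[≠] (0 : ℂ),
      deriv f₂ t + f₂ t ^ 2 + f₂ t * (-(η : ℂ) / t + r t) = 0) :
    ∀ᶠ t in 𝓝[≠] (0 : ℂ), f₁ t = f₂ t := by
  have hp : Tendsto (fun t => (t - 0) * (-(η : ℂ) / t + r t)) (𝓝[≠] 0) (𝓝 (-η)) := by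
    simpa only [sub_zero] using
      tendsto_sub_mul_div_sub_add (-(η : ℂ)) (hr.continuousAt.tendsto.mono_left nhdsWithin_le_nhds)
  have hη (n : ℤ) (hn : 0 < n) : -(η : ℂ) ≠ n := by
    norm_cast
    omega
  exact stmt_1_general hp hη hf₁ hf₂ hpole₁ hpole₂ hRic₁ hRic₂
end

section
/- Let x ∈ ℂ, let q be a function meromorphic at x with at most a simple pole at x, and let c ∈ ℂ be such that (t−x)·q(t) → −c as t → x. If f is meromorphic at x and satisfies f'(t) + f(t)² + f(t)·q(t) = 0 for all t in some punctured neighbourhood of x, then f has at most a simple pole at x, and the limit a := lim_{t→x} (t−x)·f(t) exists and satisfies a = 0 or a = c + 1. -/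
open Filter Topology

/-!
Dividing `f' + f² + f q = 0` by `f` gives `f = -(f'/f) - q`. If `f` has finite order `n` at `x`,
then `f'/f` has at most a simple pole there, with residue `n`, so `(t - x) f(t) → c - n`. A finite
limit forces `-1 ≤ n`: for `n = -1` it equals `c + 1`, while for `-1 < n` it must be `0`, as it also
is when `f` vanishes identically near `x`.
-/

section

variable {𝕜 E : Type*} [NontriviallyNormedField 𝕜] [NormedAddCommGroup E] [NormedSpace 𝕜 E]
  {f : 𝕜 → E} {x : 𝕜}

theorem meromorphicOrderAt_sub_smul (hf : MeromorphicAt f x) :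
    meromorphicOrderAt (fun t => (t - x) • f t) x = 1 + meromorphicOrderAt f x := by
  rw [← meromorphicOrderAt_id_sub_const (x := x)]
  exact meromorphicOrderAt_smul (by fun_prop) hf

theorem tendsto_sub_smul_zero_iff_neg_one_lt_meromorphicOrderAt (hf : MeromorphicAt f x) :
    Tendsto (fun t => (t - x) • f t) (𝓝[≠] x) (𝓝 0) ↔ -1 < meromorphicOrderAt f x := by
  rw [tendsto_zero_iff_meromorphicOrderAt_pos (by fun_prop), meromorphicOrderAt_sub_smul hf]
  cases meromorphicOrderAt f x with
  | top => exact iff_of_true (by simp) (WithTop.coe_lt_top (-1 : ℤ))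
  | coe n =>
    exact WithTop.coe_lt_coe.trans (neg_lt_iff_pos_add'.symm.trans WithTop.coe_lt_coe.symm)

theorem exists_tendsto_sub_smul_iff_neg_one_le_meromorphicOrderAt (hf : MeromorphicAt f x) :
    (∃ a, Tendsto (fun t => (t - x) • f t) (𝓝[≠] x) (𝓝 a)) ↔ -1 ≤ meromorphicOrderAt f x := by
  rw [tendsto_nhds_iff_meromorphicOrderAt_nonneg (by fun_prop), meromorphicOrderAt_sub_smul hf]
  cases meromorphicOrderAt f x with
  | top => exact iff_of_true (by simp) le_top
  | coe n =>
    exact WithTop.coe_le_coe.trans (neg_le_iff_add_nonneg'.symm.trans WithTop.coe_le_coe.symm)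

end

section

variable {𝕜 : Type*} [NontriviallyNormedField 𝕜]

theorem logDeriv_sub_zpow_mul {g : 𝕜 → 𝕜} {x t : 𝕜} (n : ℤ) (htx : t ≠ x) (hgt : g t ≠ 0)
    (hg : DifferentiableAt 𝕜 g t) :
    logDeriv (fun z => (z - x) ^ n * g z) t = n / (t - x) + logDeriv g t := by
  have hsub : t - x ≠ 0 := sub_ne_zero.2 htx
  rw [logDeriv_mul (f := fun z => (z - x) ^ n) t (zpow_ne_zero n hsub) hgt
      (by fun_prop (disch := grind)) hg,
    logDeriv_fun_zpow (by fun_prop)]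
  simp [logDeriv_apply, div_eq_mul_inv]

variable [CompleteSpace 𝕜] {x c : 𝕜} {f q : 𝕜 → 𝕜}

theorem exists_analyticAt_logDeriv_eventuallyEq (hf : MeromorphicAt f x) {n : ℤ}
    (hn : meromorphicOrderAt f x = n) :
    ∃ h : 𝕜 → 𝕜, AnalyticAt 𝕜 h x ∧ logDeriv f =ᶠ[𝓝[≠] x] fun t => n / (t - x) + h t := by
  obtain ⟨g, hg, hgx, hfg⟩ := (meromorphicOrderAt_eq_int_iff hf).1 hn
  refine ⟨logDeriv g, hg.deriv.div hg hgx, (logDeriv_congr_nhdsNE hfg).trans ?_⟩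
  filter_upwards [eventually_mem_nhdsWithin,
    hg.eventually_analyticAt.filter_mono nhdsWithin_le_nhds,
    (hg.continuousAt.eventually_ne hgx).filter_mono nhdsWithin_le_nhds] with t htx hgt hgt_ne
  exact logDeriv_sub_zpow_mul n htx hgt_ne hgt.differentiableAt

theorem tendsto_sub_mul_logDeriv (hf : MeromorphicAt f x) {n : ℤ}
    (hn : meromorphicOrderAt f x = n) :
    Tendsto (fun t => (t - x) * logDeriv f t) (𝓝[≠] x) (𝓝 n) := by
  obtain ⟨h, hh, hfh⟩ := exists_analyticAt_logDeriv_eventuallyEq hf hn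
  have hcont : ContinuousAt (fun t => n + (t - x) * h t) x := by
    have := hh.continuousAt
    fun_prop
  have hlim : Tendsto (fun t => n + (t - x) * h t) (𝓝[≠] x) (𝓝 n) := by
    simpa using hcont.tendsto.mono_left nhdsWithin_le_nhds
  refine hlim.congr' ?_
  filter_upwards [hfh, eventually_mem_nhdsWithin] with t ht htx
  have hsub : t - x ≠ 0 := sub_ne_zero.2 htx
  rw [ht, mul_add, mul_div_cancel₀ _ hsub]

theorem tendsto_sub_mul_of_riccati (hf : MeromorphicAt f x)
    (hqc : Tendsto (fun t => (t - x) * q t) (𝓝[≠] x) (𝓝 (-c)))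
    (hRic : ∀ᶠ t in 𝓝[≠] x, deriv f t + f t ^ 2 + f t * q t = 0) {n : ℤ}
    (hn : meromorphicOrderAt f x = n) :
    Tendsto (fun t => (t - x) * f t) (𝓝[≠] x) (𝓝 (c - n)) := by
  have hf_ne : ∀ᶠ t in 𝓝[≠] x, f t ≠ 0 :=
    (meromorphicOrderAt_ne_top_iff_eventually_ne_zero hf).1 (by simp [hn])
  have hlim := ((tendsto_sub_mul_logDeriv hf hn).add hqc).neg
  rw [show -((n : 𝕜) + -c) = c - n by ring] at hlim
  refine hlim.congr' ?_
  filter_upwards [hRic, hf_ne] with t hRt hft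
  have hlog : logDeriv f t = -(f t + q t) := by
    rw [logDeriv_apply, div_eq_iff hft]
    linear_combination hRt
  rw [hlog]
  ring

theorem stmt_3_general (hf : MeromorphicAt f x)
    (hqc : Tendsto (fun t => (t - x) * q t) (𝓝[≠] x) (𝓝 (-c)))
    (hRic : ∀ᶠ t in 𝓝[≠] x, deriv f t + f t ^ 2 + f t * q t = 0) :
    ∃ a : 𝕜, Tendsto (fun t => (t - x) * f t) (𝓝[≠] x) (𝓝 a) ∧ (a = 0 ∨ a = c + 1) := by
  rcases lt_or_ge (-1) (meromorphicOrderAt f x) with hord | hord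
  · exact ⟨0, (tendsto_sub_smul_zero_iff_neg_one_lt_meromorphicOrderAt hf).2 hord, .inl rfl⟩
  · obtain ⟨n, hn⟩ := WithTop.ne_top_iff_exists.1
      (hord.trans_lt (WithTop.coe_lt_top (-1 : ℤ))).ne
    have hlim := tendsto_sub_mul_of_riccati hf hqc hRic hn.symm
    have hsimple : -1 ≤ meromorphicOrderAt f x :=
      (exists_tendsto_sub_smul_iff_neg_one_le_meromorphicOrderAt hf).1 ⟨_, hlim⟩
    have hn_eq : n = -1 := WithTop.coe_injective (hn.trans (hord.antisymm hsimple))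
    exact ⟨c - n, hlim, .inr (by simp [hn_eq])⟩

end

/-- a meromorphic solution of `f' + f² + f·q = 0`, where `q` has at
most a simple pole at `x` with residue `−c`, has at most a simple pole at `x`,
whose residue is `0` or `c + 1`. -/
theorem stmt_3 (x c : ℂ) (q f : ℂ → ℂ)
    (hq : MeromorphicAt q x)
    (hqc : Tendsto (fun t => (t - x) * q t) (𝓝[≠] x) (𝓝 (-c)))
    (hf : MeromorphicAt f x)
    (hRic : ∀ᶠ t in 𝓝[≠] x, deriv f t + f t ^ 2 + f t * q t = 0) :
    ∃ a : ℂ, Tendsto (fun t => (t - x) * f t) (𝓝[≠] x) (𝓝 a) ∧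
      (a = 0 ∨ a = c + 1) :=
  stmt_3_general hf hqc hRic
end

section
/- Let f and q be functions meromorphic on all of ℂ such that s ↦ f(1/s) and s ↦ q(1/s) are meromorphic at 0, let m ∈ ℝ with m ≥ −1 be such that q(1/s)/s → −m as s → 0 (s ≠ 0), and suppose f'(t) + f(t)² + f(t)·q(t) = 0 holds for all t outside some finite subset of ℂ. If f(1/s)/s → 0 as s → 0 (i.e. f(t) = O(1/t²) at infinity), then f vanishes identically outside its polar set; in particular, if f is not identically zero then lim_{s→0} f(1/s)/s = m + 1. -/
open Filter Topology

/-! In the coordinate `s = 1 / t` the equation becomes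
`s * logDeriv g s = f (1 / s) / s + q (1 / s) / s` for `g s = f (1 / s)`. If `g` has finite order
`n` at `0`, the left-hand side tends to `n`, hence `f (1 / s) / s` tends to `n + m`. A finite limit
forces `1 ≤ n`, and it vanishes exactly when `2 ≤ n`; as `n + m` is nonzero for `2 ≤ n`, the order
is `1` and the limit `m + 1` is nonzero. If `g` has infinite order, `f` vanishes near infinity,
hence everywhere by the identity theorem. -/

section

open Bornology

variable {𝕜 E : Type*} [NontriviallyNormedField 𝕜] [NormedAddCommGroup E] [NormedSpace 𝕜 E]

/- If `f` is not differentiable at `x⁻¹`, both sides are the junk value `0`. -/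
theorem deriv_comp_inv {x : 𝕜} (f : 𝕜 → E) (hx : x ≠ 0) :
    deriv (fun y => f y⁻¹) x = -(x ^ 2)⁻¹ • deriv f x⁻¹ := by
  by_cases hf : DifferentiableAt 𝕜 f x⁻¹
  · exact (hf.hasDerivAt.scomp x (hasDerivAt_inv hx)).deriv
  · have hcomp : ¬ DifferentiableAt 𝕜 (fun y => f y⁻¹) x := fun h => hf <| by
      rw [← inv_inv x] at h
      simpa [Function.comp_def] using h.comp x⁻¹ (differentiableAt_inv (inv_ne_zero hx))
    rw [deriv_zero_of_not_differentiableAt hf, deriv_zero_of_not_differentiableAt hcomp, smul_zero]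

theorem tendsto_mul_logDeriv_of_meromorphicOrderAt_eq [CompleteSpace 𝕜] {g : 𝕜 → 𝕜} {x : 𝕜} {n : ℤ}
    (hg : MeromorphicAt g x) (hn : meromorphicOrderAt g x = n) :
    Tendsto (fun z => (z - x) * logDeriv g z) (𝓝[≠] x) (𝓝 n) := by
  obtain ⟨h, h_an, hx_ne, hgh⟩ := (meromorphicOrderAt_eq_int_iff hg).1 hn
  have hlim : Tendsto (fun z => n + (z - x) * logDeriv h z) (𝓝[≠] x) (𝓝 n) := by
    have hcont : ContinuousAt (fun z => n + (z - x) * (deriv h z / h z)) x := by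
      have := h_an.continuousAt
      have := h_an.deriv.continuousAt
      fun_prop (disch := assumption)
    simpa [logDeriv_apply] using hcont.tendsto.mono_left nhdsWithin_le_nhds
  refine hlim.congr' ?_
  filter_upwards [logDeriv_congr_nhdsNE hgh, self_mem_nhdsWithin,
    h_an.eventually_analyticAt.filter_mono nhdsWithin_le_nhds,
    (h_an.continuousAt.eventually_ne hx_ne).filter_mono nhdsWithin_le_nhds]
    with z hlog hzx hz_an hz_ne
  have hsub : z - x ≠ 0 := sub_ne_zero.2 hzx
  have hzpow : logDeriv (fun y => (y - x) ^ n) z = n / (z - x) := by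
    rw [logDeriv_fun_zpow (by fun_prop)]
    simp [logDeriv_apply, div_eq_mul_inv]
  have hmul : logDeriv (fun y => (y - x) ^ n * h y) z = n / (z - x) + logDeriv h z := by
    rw [logDeriv_mul (f := fun y => (y - x) ^ n) z (zpow_ne_zero n hsub) hz_ne
      (DifferentiableAt.zpow (by fun_prop) (Or.inl hsub)) hz_an.differentiableAt, hzpow]
  rw [hlog]
  simp only [smul_eq_mul]
  rw [hmul, mul_add, mul_div_cancel₀ _ hsub]

theorem meromorphicOrderAt_div_id_add_one {g : 𝕜 → 𝕜} (hg : MeromorphicAt g 0) :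
    meromorphicOrderAt (fun s => g s / s) 0 + 1 = meromorphicOrderAt g 0 := by
  have hdiv : MeromorphicAt (fun s => g s / s) 0 := hg.div (.id 0)
  rw [← meromorphicOrderAt_id (𝕜 := 𝕜), ← meromorphicOrderAt_mul hdiv (.id 0)]
  refine meromorphicOrderAt_congr ?_
  filter_upwards [self_mem_nhdsWithin] with s hs
  exact div_mul_cancel₀ _ hs

theorem one_le_meromorphicOrderAt_of_tendsto_div_id {g : 𝕜 → 𝕜} {L : 𝕜}
    (hg : MeromorphicAt g 0) (hL : Tendsto (fun s => g s / s) (𝓝[≠] 0) (𝓝 L)) :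
    1 ≤ meromorphicOrderAt g 0 := by
  have hnonneg := (tendsto_nhds_iff_meromorphicOrderAt_nonneg (hg.div (.id 0))).1 ⟨L, hL⟩
  rw [← meromorphicOrderAt_div_id_add_one hg]
  exact le_add_of_nonneg_left hnonneg

theorem eq_zero_iff_one_lt_meromorphicOrderAt_of_tendsto_div_id {g : 𝕜 → 𝕜} {L : 𝕜}
    (hg : MeromorphicAt g 0) (hL : Tendsto (fun s => g s / s) (𝓝[≠] 0) (𝓝 L)) :
    L = 0 ↔ 1 < meromorphicOrderAt g 0 := by
  have hdiv : MeromorphicAt (fun s => g s / s) 0 := hg.div (.id 0)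
  calc L = 0 ↔ Tendsto (fun s => g s / s) (𝓝[≠] 0) (𝓝 0) :=
        ⟨fun h => h ▸ hL, tendsto_nhds_unique hL⟩
    _ ↔ 0 < meromorphicOrderAt (fun s => g s / s) 0 := tendsto_zero_iff_meromorphicOrderAt_pos hdiv
    _ ↔ 1 < meromorphicOrderAt g 0 := by
        rw [← meromorphicOrderAt_div_id_add_one hg]
        cases meromorphicOrderAt (fun s => g s / s) 0 with
        | top => simp
        | coe k => norm_cast; omega

theorem mul_logDeriv_comp_inv_of_riccati {f q : 𝕜 → 𝕜} {s : 𝕜} (hs : s ≠ 0) (hf : f (1 / s) ≠ 0)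
    (hRic : deriv f (1 / s) + f (1 / s) ^ 2 + f (1 / s) * q (1 / s) = 0) :
    s * logDeriv (fun r => f (1 / r)) s = f (1 / s) / s + q (1 / s) / s := by
  simp only [one_div] at hf hRic ⊢
  rw [logDeriv_apply, deriv_comp_inv f hs, smul_eq_mul,
    show deriv f s⁻¹ = -(f s⁻¹ * (f s⁻¹ + q s⁻¹)) by linear_combination hRic]
  generalize f s⁻¹ = w at hf ⊢
  field_simp

theorem tendsto_comp_inv_div_id_of_riccati [CompleteSpace 𝕜] {f q : 𝕜 → 𝕜} {m : 𝕜} {n : ℤ}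
    (hf : MeromorphicAt (fun s => f (1 / s)) 0)
    (hn : meromorphicOrderAt (fun s => f (1 / s)) 0 = n)
    (hq : Tendsto (fun s => q (1 / s) / s) (𝓝[≠] 0) (𝓝 (-m)))
    (hRic : ∀ᶠ t in cobounded 𝕜, deriv f t + f t ^ 2 + f t * q t = 0) :
    Tendsto (fun s => f (1 / s) / s) (𝓝[≠] 0) (𝓝 (n + m)) := by
  have hlim := (tendsto_mul_logDeriv_of_meromorphicOrderAt_eq hf hn).sub hq
  simp only [sub_zero, sub_neg_eq_add] at hlim
  have hf_ne : ∀ᶠ s in 𝓝[≠] 0, f (1 / s) ≠ 0 :=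
    (meromorphicOrderAt_ne_top_iff_eventually_ne_zero hf).1 (hn ▸ WithTop.coe_ne_top)
  have hRic_inv := tendsto_inv₀_nhdsNE_zero.eventually hRic
  simp only [← one_div] at hRic_inv
  refine hlim.congr' ?_
  filter_upwards [hf_ne, hRic_inv, self_mem_nhdsWithin] with s hs_ne hs_ric hs
  rw [mul_logDeriv_comp_inv_of_riccati hs hs_ne hs_ric, add_sub_cancel_right]

theorem eq_zero_of_eventually_cobounded_eq_zero [PreconnectedSpace 𝕜] {f : 𝕜 → E} {z : 𝕜}
    (hf : Meromorphic f) (h : ∀ᶠ t in cobounded 𝕜, f t = 0) (hz : ContinuousAt f z) :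
    f z = 0 := by
  obtain ⟨r, -, hr⟩ := (Metric.hasBasis_cobounded_compl_closedBall (0 : 𝕜)).eventually_iff.1 h
  obtain ⟨w, hw⟩ := NormedField.exists_lt_norm 𝕜 r
  have hw_top : meromorphicOrderAt f w = ⊤ := by
    refine meromorphicOrderAt_eq_top_iff.2 (Eventually.filter_mono nhdsWithin_le_nhds ?_)
    have hw_mem : w ∈ (Metric.closedBall (0 : 𝕜) r)ᶜ := by simpa using hw
    filter_upwards [Metric.isClosed_closedBall.isOpen_compl.mem_nhds hw_mem] with t ht using hr ht
  have hz_top : meromorphicOrderAt f z = ⊤ := by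
    by_contra hz_ne
    exact (hf.meromorphicOn (s := Set.univ)).meromorphicOrderAt_ne_top_of_isPreconnected
      isPreconnected_univ (Set.mem_univ z) (Set.mem_univ w) hz_ne hw_top
  have hz_zero : f =ᶠ[𝓝[≠] z] fun _ => 0 := meromorphicOrderAt_eq_top_iff.1 hz_top
  exact ((hz.eventuallyEq_nhds_iff_eventuallyEq_nhdsNE continuousAt_const).1 hz_zero).eq_of_nhds

theorem add_one_ne_zero_and_tendsto_comp_inv_div_id_of_riccati [CompleteSpace 𝕜]
    {f q : 𝕜 → 𝕜} {m : 𝕜} (hm : ∀ n : ℤ, 2 ≤ n → (n : 𝕜) + m ≠ 0)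
    (hf : MeromorphicAt (fun s => f (1 / s)) 0)
    (hf_top : meromorphicOrderAt (fun s => f (1 / s)) 0 ≠ ⊤)
    (hq : Tendsto (fun s => q (1 / s) / s) (𝓝[≠] 0) (𝓝 (-m)))
    (hRic : ∀ᶠ t in cobounded 𝕜, deriv f t + f t ^ 2 + f t * q t = 0) :
    m + 1 ≠ 0 ∧ Tendsto (fun s => f (1 / s) / s) (𝓝[≠] 0) (𝓝 (m + 1)) := by
  obtain ⟨n, hn⟩ := WithTop.ne_top_iff_exists.1 hf_top
  have hlim := tendsto_comp_inv_div_id_of_riccati hf hn.symm hq hRic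
  have hn_one := one_le_meromorphicOrderAt_of_tendsto_div_id hf hlim
  have hzero_iff := eq_zero_iff_one_lt_meromorphicOrderAt_of_tendsto_div_id hf hlim
  rw [← hn] at hn_one hzero_iff
  norm_cast at hn_one hzero_iff
  obtain rfl : 1 = n := hn_one.eq_of_not_lt fun hn_lt => hm n hn_lt (hzero_iff.2 hn_lt)
  rw [Int.cast_one, add_comm] at hlim hzero_iff
  exact ⟨mt hzero_iff.1 (lt_irrefl 1), hlim⟩

theorem stmt_5_general [CompleteSpace 𝕜] [PreconnectedSpace 𝕜] {f q : 𝕜 → 𝕜} {m : 𝕜}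
    (hm : ∀ n : ℤ, 2 ≤ n → (n : 𝕜) + m ≠ 0)
    (hf : Meromorphic f) (hf_inf : MeromorphicAt (fun s => f (1 / s)) 0)
    (hq : Tendsto (fun s => q (1 / s) / s) (𝓝[≠] 0) (𝓝 (-m)))
    (hRic : ∀ᶠ t in cobounded 𝕜, deriv f t + f t ^ 2 + f t * q t = 0) :
    (Tendsto (fun s => f (1 / s) / s) (𝓝[≠] 0) (𝓝 0) → ∀ z, AnalyticAt 𝕜 f z → f z = 0) ∧
    ((¬ ∀ z, AnalyticAt 𝕜 f z → f z = 0) →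
      Tendsto (fun s => f (1 / s) / s) (𝓝[≠] 0) (𝓝 (m + 1))) := by
  by_cases hf_top : meromorphicOrderAt (fun s => f (1 / s)) 0 = ⊤
  · have hzero : ∀ᶠ t in cobounded 𝕜, f t = 0 := by
      simpa using tendsto_inv₀_cobounded'.eventually (meromorphicOrderAt_eq_top_iff.1 hf_top)
    have hf_zero (z : 𝕜) (hz : AnalyticAt 𝕜 f z) : f z = 0 :=
      eq_zero_of_eventually_cobounded_eq_zero hf hzero hz.continuousAt
    exact ⟨fun _ => hf_zero, fun hf_ne => absurd hf_zero hf_ne⟩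
  · obtain ⟨hm_ne, hlim⟩ :=
      add_one_ne_zero_and_tendsto_comp_inv_div_id_of_riccati hm hf_inf hf_top hq hRic
    exact ⟨fun hlim_zero => absurd (tendsto_nhds_unique hlim hlim_zero) hm_ne, fun _ => hlim⟩

end

/-- a global meromorphic solution of `f' + f² + f·q = 0` with
`q(t) = −m/t + O(1/t²)` at infinity, `m ≥ −1`, and `f(t) = O(1/t²)` at infinity
vanishes identically outside its polar set; in particular a nonzero solution
satisfies `f(t) = (m+1)/t + O(1/t²)` at infinity. -/
theorem stmt_5 (f q : ℂ → ℂ) (m : ℝ) (hm' : -1 ≤ m)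
    (hf : ∀ z : ℂ, MeromorphicAt f z) (hq : ∀ z : ℂ, MeromorphicAt q z)
    (hfinf : MeromorphicAt (fun s => f (1 / s)) 0)
    (hqinf : MeromorphicAt (fun s => q (1 / s)) 0)
    (hm : Tendsto (fun s => q (1 / s) / s) (𝓝[≠] (0 : ℂ)) (𝓝 (-(m : ℂ))))
    (hRic : ∃ S : Finset ℂ, ∀ t : ℂ, t ∉ S →
      deriv f t + f t ^ 2 + f t * q t = 0) :
    (Tendsto (fun s => f (1 / s) / s) (𝓝[≠] (0 : ℂ)) (𝓝 0) →
      ∀ z : ℂ, AnalyticAt ℂ f z → f z = 0) ∧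
    ((¬ ∀ z : ℂ, AnalyticAt ℂ f z → f z = 0) →
      Tendsto (fun s => f (1 / s) / s) (𝓝[≠] (0 : ℂ)) (𝓝 ((m : ℂ) + 1))) := by
  obtain ⟨S, hS⟩ := hRic
  have hm_ne (n : ℤ) (hn : 2 ≤ n) : (n : ℂ) + m ≠ 0 := by
    have hn' : (2 : ℝ) ≤ n := mod_cast hn
    exact_mod_cast (by linarith : (0 : ℝ) < n + m).ne'
  have hS_cobounded : ∀ᶠ t in Bornology.cobounded ℂ, t ∉ S := S.finite_toSet.isBounded
  exact stmt_5_general hm_ne hf hfinf hm (hS_cobounded.mono hS)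
end

section
/- Let f₁, f₂, f₃ be functions meromorphic at 0 satisfying the coupled Riccati system on a punctured neighbourhood of 0. Then f₁ and f₂ have at most simple poles at 0 and f₃ has at most a double pole at 0; moreover, setting a := lim_{t→0} t·f₁(t), b := lim_{t→0} t·f₂(t) and c := lim_{t→0} t²·f₃(t) (all of which exist), and writing μ := η+1, the triple (a,b,c) is one of the six triples (0,0,0), (2μ,0,0), (μ/2, μ/2, 0), (μ/2, −μ/2, 0), (3μ/2, μ/2, μ²), (3μ/2, −μ/2, −μ²). -/
open Filter Topology

/-- The singular coefficient function q(t) = −η/t + r(t). -/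
noncomputable def riccatiQ (η : ℕ) (r : ℂ → ℂ) (t : ℂ) : ℂ := -(η : ℂ) / t + r t

/-- The coupled Riccati system associated to the data (η, r, r̄), imposed on a
punctured neighbourhood of the origin. -/
def CoupledRiccatiSystem (η : ℕ) (r rb f₁ f₂ f₃ : ℂ → ℂ) : Prop :=
  ∀ᶠ t in 𝓝[≠] (0 : ℂ),
    2 * deriv f₁ t + f₁ t ^ 2 + 3 * f₂ t ^ 2
      + (riccatiQ η r t + riccatiQ η rb t) * f₁ t
      + (riccatiQ η r t - riccatiQ η rb t) * f₂ t = 0 ∧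
    2 * deriv f₂ t + 4 * f₁ t * f₂ t - 2 * f₃ t
      + (riccatiQ η r t + riccatiQ η rb t) * f₂ t
      + (riccatiQ η r t - riccatiQ η rb t) * f₁ t = 0 ∧
    2 * deriv f₃ t + 2 * f₁ t * f₃ t + f₂ t * (f₁ t ^ 2 - f₂ t ^ 2)
      + 2 * (riccatiQ η r t + riccatiQ η rb t) * f₃ t = 0

/-!
Give `f₁`, `f₂` weight `n` and `f₃` weight `2n`, and compare the coefficients of highest weight in
the system. The second equation determines `f₃`, so a pole bound `n ≥ 1` for `f₁` and `f₂` gives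
the bound `2n` for `f₃`, and the coefficients `(a, b, c)` satisfy
`a² + 3b² = 2μa`, `c = 2ab - μb`, `2ac + b(a² - b²) = 4μc`,
where `μ = η + 1` if `n = 1` and `μ = 0` if `n ≥ 2`, because differentiation and multiplication by
`q`, `q̄` raise the weight only by one. These equations have the six listed solutions, all of them
zero when `μ = 0`; so a bound `n ≥ 2` can be lowered until `n = 1`.
-/

section PoleCoefficient

variable {𝕜 : Type*} [NontriviallyNormedField 𝕜] {f g : 𝕜 → 𝕜} {x a b : 𝕜} {m n : ℕ}

/-- For `f` meromorphic at `x`: the pole of `f` at `x` has order at most `n`, and `a`, possibly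
zero, is the coefficient of `(z - x)⁻ⁿ` in the Laurent expansion. -/
def HasPoleCoeffAt (f : 𝕜 → 𝕜) (n : ℕ) (a x : 𝕜) : Prop :=
  Tendsto (fun z ↦ (z - x) ^ n * f z) (𝓝[≠] x) (𝓝 a)

namespace HasPoleCoeffAt

theorem congr (hf : HasPoleCoeffAt f n a x) (hfg : f =ᶠ[𝓝[≠] x] g) : HasPoleCoeffAt g n a x :=
  Tendsto.congr' (hfg.mono fun z hz ↦ by simp only [hz]) hf

theorem eq_zero_of_eventuallyEq_zero (hf : HasPoleCoeffAt f n a x) (h0 : f =ᶠ[𝓝[≠] x] 0) :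
    a = 0 :=
  tendsto_nhds_unique (hf.congr h0) (by simp)

theorem add (hf : HasPoleCoeffAt f n a x) (hg : HasPoleCoeffAt g n b x) :
    HasPoleCoeffAt (f + g) n (a + b) x :=
  (Tendsto.add hf hg).congr fun z ↦ by simp only [Pi.add_apply, mul_add]

theorem sub (hf : HasPoleCoeffAt f n a x) (hg : HasPoleCoeffAt g n b x) :
    HasPoleCoeffAt (f - g) n (a - b) x :=
  (Tendsto.sub hf hg).congr fun z ↦ by simp only [Pi.sub_apply, mul_sub]

theorem const_smul (c : 𝕜) (hf : HasPoleCoeffAt f n a x) :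
    HasPoleCoeffAt (c • f) n (c * a) x :=
  (Tendsto.const_mul c hf).congr fun z ↦ by simp only [Pi.smul_apply, smul_eq_mul]; ring

theorem mul (hf : HasPoleCoeffAt f m a x) (hg : HasPoleCoeffAt g n b x) :
    HasPoleCoeffAt (f * g) (m + n) (a * b) x :=
  (Tendsto.mul hf hg).congr fun z ↦ by simp only [Pi.mul_apply]; ring

theorem raise (k : ℕ) (hf : HasPoleCoeffAt f n a x) (hm : m = n + k) :
    HasPoleCoeffAt f m (0 ^ k * a) x := by
  have hpow : Tendsto (fun z ↦ (z - x) ^ k) (𝓝[≠] x) (𝓝 (0 ^ k)) :=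
    (Continuous.tendsto' (by fun_prop) x _ (by simp)).mono_left nhdsWithin_le_nhds
  exact (hpow.mul hf).congr fun z ↦ by rw [hm]; ring

theorem exists_analyticAt_eventuallyEq (hf : MeromorphicAt f x) (h : HasPoleCoeffAt f n a x) :
    ∃ F : 𝕜 → 𝕜, AnalyticAt 𝕜 F x ∧ F x = a ∧ (fun z ↦ (z - x) ^ n * f z) =ᶠ[𝓝[≠] x] F := by
  classical
  let p : 𝕜 → 𝕜 := fun z ↦ (z - x) ^ n * f z
  have hp : MeromorphicAt p x := by fun_prop
  refine ⟨Function.update p x a, ?_, Function.update_self x a p,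
    (Function.update_eventuallyEq_nhdsNE p x x a).symm⟩
  exact (hp.update x a).analyticAt (continuousAt_update_same.2 h)

theorem exists_lower (hf : MeromorphicAt f x) (h : HasPoleCoeffAt f (n + 1) 0 x) :
    ∃ b, HasPoleCoeffAt f n b x := by
  obtain ⟨F, hF, hFx, hfF⟩ := h.exists_analyticAt_eventuallyEq hf
  have hlim : Tendsto (dslope F x) (𝓝[≠] x) (𝓝 (dslope F x x)) :=
    (continuousAt_dslope_same.2 hF.differentiableAt).tendsto.mono_left nhdsWithin_le_nhds
  refine ⟨dslope F x x, hlim.congr' ?_⟩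
  filter_upwards [hfF, self_mem_nhdsWithin] with z hz hzx
  apply mul_left_cancel₀ (sub_ne_zero.2 hzx)
  calc (z - x) * dslope F x z = F z := by simpa [hFx] using sub_smul_dslope F x z
    _ = (z - x) * ((z - x) ^ n * f z) := by rw [← hz]; ring

protected theorem deriv [CompleteSpace 𝕜] (hf : MeromorphicAt f x) (h : HasPoleCoeffAt f n a x) :
    HasPoleCoeffAt (deriv f) (n + 1) (-n * a) x := by
  obtain ⟨F, hF, hFx, hfF⟩ := h.exists_analyticAt_eventuallyEq hf
  have hlim : Tendsto (fun z ↦ (z - x) * deriv F z - n * F z) (𝓝[≠] x) (𝓝 (-n * a)) := by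
    have hF' : ContinuousAt (deriv F) x := hF.deriv.continuousAt
    have hF₀ : ContinuousAt F x := hF.continuousAt
    have hcont : ContinuousAt (fun z ↦ (z - x) * deriv F z - n * F z) x := by fun_prop
    simpa [hFx] using hcont.tendsto.mono_left nhdsWithin_le_nhds
  refine hlim.congr' ?_
  filter_upwards [hfF, hfF.nhdsNE_deriv, hf.eventually_analyticAt] with z hz hz' hfz
  have hprod : deriv (fun w ↦ (w - x) ^ n * f w) z =
      n * (z - x) ^ (n - 1) * f z + (z - x) ^ n * deriv f z := by
    have hpow : HasDerivAt (fun w ↦ (w - x) ^ n) (n * (z - x) ^ (n - 1)) z := by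
      simpa using ((hasDerivAt_id z).sub_const x).fun_pow n
    exact (hpow.mul hfz.differentiableAt.hasDerivAt).deriv
  have hpred : (n : 𝕜) * (z - x) ^ (n - 1) * (z - x) = n * (z - x) ^ n := by
    cases n <;> simp [pow_succ, mul_assoc]
  rw [← hz, ← hz', hprod]
  linear_combination f z * hpred

theorem deriv_add_mul [CompleteSpace 𝕜] (hf : MeromorphicAt f x) (h : HasPoleCoeffAt f n a x)
    (hg : HasPoleCoeffAt g 1 b x) :
    HasPoleCoeffAt (deriv f + f * g) (n + 1) ((b - n) * a) x := by
  convert (h.deriv hf).add (h.mul hg) using 1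
  ring

end HasPoleCoeffAt

theorem exists_hasPoleCoeffAt (hf : MeromorphicAt f x) : ∃ n a, HasPoleCoeffAt f n a x := by
  obtain ⟨n, hn⟩ := hf
  exact ⟨n, _, hn.continuousAt.tendsto.mono_left nhdsWithin_le_nhds⟩

end PoleCoefficient

section LeadingTriples

variable {K : Type*} [Field K]

/-- The possible leading coefficients `(a, b, c)` of a solution of the coupled Riccati system with
poles of order at most `1`, `1`, `2`, where `q` and `q̄` have simple poles of residue `1 - μ`. -/
def leadingTriples (μ : K) : Set (K × K × K) :=
  {(0, 0, 0), (2 * μ, 0, 0), (μ / 2, μ / 2, 0), (μ / 2, -(μ / 2), 0),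
    (3 * μ / 2, μ / 2, μ ^ 2), (3 * μ / 2, -(μ / 2), -μ ^ 2)}

theorem leadingTriples_zero : leadingTriples (0 : K) = {(0, 0, 0)} := by
  simp [leadingTriples]

theorem mem_leadingTriples_of_indicial_equations (two_ne : (2 : K) ≠ 0) {μ a b c : K}
    (h₁ : a ^ 2 + 3 * b ^ 2 = 2 * μ * a) (h₂ : c = 2 * a * b - μ * b)
    (h₃ : 2 * a * c + b * (a ^ 2 - b ^ 2) = 4 * μ * c) : (a, b, c) ∈ leadingTriples μ := by
  obtain ⟨ν, rfl⟩ : ∃ ν, μ = 2 * ν := ⟨μ / 2, by field_simp⟩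
  have half : 2 * ν / 2 = ν := by field_simp
  have three_halves : 3 * (2 * ν) / 2 = 3 * ν := by field_simp
  simp only [leadingTriples, half, three_halves, Set.mem_insert_iff, Set.mem_singleton_iff,
    Prod.mk.injEq]
  subst h₂
  by_cases hb : b = 0
  · have ha : a = 0 ∨ a - 4 * ν = 0 := mul_eq_zero.1 <| by rw [hb] at h₁; linear_combination h₁
    grind
  · have sixteen_ne : (16 : K) ≠ 0 := by
      convert pow_ne_zero 4 two_ne using 1
      norm_num
    have hab : 5 * a ^ 2 - 20 * ν * a + 16 * ν ^ 2 - b ^ 2 = 0 :=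
      mul_left_cancel₀ hb (by linear_combination h₃)
    have ha : (a - ν) * (a - 3 * ν) = 0 :=
      mul_left_cancel₀ sixteen_ne (by linear_combination 3 * hab + h₁)
    have hb' : (b - ν) * (b + ν) = 0 :=
      mul_left_cancel₀ sixteen_ne (by linear_combination 5 * h₁ - hab)
    rcases mul_eq_zero.1 ha with ha | ha <;> rcases mul_eq_zero.1 hb' with hb' | hb' <;> grind

end LeadingTriples

section CoupledRiccati

variable {𝕜 : Type*} [NontriviallyNormedField 𝕜] {q qb f₁ f₂ f₃ : 𝕜 → 𝕜} {x η a b c : 𝕜}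

/-- The coupled Riccati system on a punctured neighbourhood of `x`, with arbitrary coefficient
functions `q` and `qb` (the `q̄` of the system). -/
def CoupledRiccatiAt (q qb f₁ f₂ f₃ : 𝕜 → 𝕜) (x : 𝕜) : Prop :=
  ∀ᶠ t in 𝓝[≠] x,
    2 * deriv f₁ t + f₁ t ^ 2 + 3 * f₂ t ^ 2 + (q t + qb t) * f₁ t + (q t - qb t) * f₂ t = 0 ∧
    2 * deriv f₂ t + 4 * f₁ t * f₂ t - 2 * f₃ t
      + (q t + qb t) * f₂ t + (q t - qb t) * f₁ t = 0 ∧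
    2 * deriv f₃ t + 2 * f₁ t * f₃ t + f₂ t * (f₁ t ^ 2 - f₂ t ^ 2)
      + 2 * (q t + qb t) * f₃ t = 0

/-- The coefficient of the indicial equations for the pole order `n = k + 1`: it is `1 + η` for
`n = 1` and `0` for `n ≥ 2`, because the linear terms have top weight for `n = 1` only. -/
def indicialCoeff (η : 𝕜) (k : ℕ) : 𝕜 := 0 ^ k * (k + 1 + η)

namespace CoupledRiccatiAt

variable {k : ℕ} [CompleteSpace 𝕜]

theorem indicial_equation_first (hsys : CoupledRiccatiAt q qb f₁ f₂ f₃ x)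
    (hq : HasPoleCoeffAt q 1 (-η) x) (hqb : HasPoleCoeffAt qb 1 (-η) x)
    (m₁ : MeromorphicAt f₁ x)
    (h₁ : HasPoleCoeffAt f₁ (k + 1) a x) (h₂ : HasPoleCoeffAt f₂ (k + 1) b x) :
    a ^ 2 + 3 * b ^ 2 = 2 * indicialCoeff η k * a := by
  -- `2 f₁' + (q + q̄) f₁ = (f₁' + f₁ q) + (f₁' + f₁ q̄)`; the other two equations split likewise.
  have hlin := (((h₁.deriv_add_mul m₁ hq).add (h₁.deriv_add_mul m₁ hqb)).add
    (h₂.mul (hq.sub hqb))).raise (m := k + 1 + (k + 1)) k (by omega)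
  have hsum := (hlin.add (h₁.mul h₁)).add ((h₂.mul h₂).const_smul 3)
  have hcoeff := hsum.eq_zero_of_eventuallyEq_zero <| by
    filter_upwards [hsys] with t ht
    simp only [Pi.add_apply, Pi.mul_apply, Pi.sub_apply, Pi.smul_apply, Pi.zero_apply, smul_eq_mul]
    linear_combination ht.1
  push_cast at hcoeff
  rw [indicialCoeff]
  linear_combination hcoeff

theorem hasPoleCoeffAt_third (hsys : CoupledRiccatiAt q qb f₁ f₂ f₃ x) (two_ne : (2 : 𝕜) ≠ 0)
    (hq : HasPoleCoeffAt q 1 (-η) x) (hqb : HasPoleCoeffAt qb 1 (-η) x)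
    (m₂ : MeromorphicAt f₂ x)
    (h₁ : HasPoleCoeffAt f₁ (k + 1) a x) (h₂ : HasPoleCoeffAt f₂ (k + 1) b x) :
    HasPoleCoeffAt f₃ (k + 1 + (k + 1)) (2 * a * b - indicialCoeff η k * b) x := by
  have hlin := (((h₂.deriv_add_mul m₂ hq).add (h₂.deriv_add_mul m₂ hqb)).add
    (h₁.mul (hq.sub hqb))).raise (m := k + 1 + (k + 1)) k (by omega)
  have hsum := (hlin.const_smul 2⁻¹).add ((h₁.mul h₂).const_smul 2)
  convert hsum.congr (g := f₃) ?_ using 1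
  · rw [indicialCoeff]
    push_cast
    field_simp
    ring
  · filter_upwards [hsys] with t ht
    simp only [Pi.add_apply, Pi.mul_apply, Pi.sub_apply, Pi.smul_apply, smul_eq_mul]
    field_simp
    linear_combination ht.2.1

theorem indicial_equation_third (hsys : CoupledRiccatiAt q qb f₁ f₂ f₃ x)
    (hq : HasPoleCoeffAt q 1 (-η) x) (hqb : HasPoleCoeffAt qb 1 (-η) x)
    (m₃ : MeromorphicAt f₃ x) (h₁ : HasPoleCoeffAt f₁ (k + 1) a x)
    (h₂ : HasPoleCoeffAt f₂ (k + 1) b x) (h₃ : HasPoleCoeffAt f₃ (k + 1 + (k + 1)) c x) :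
    2 * a * c + b * (a ^ 2 - b ^ 2) = 4 * indicialCoeff η k * c := by
  have hlin := ((h₃.deriv_add_mul m₃ (hq.const_smul 2)).add
    (h₃.deriv_add_mul m₃ (hqb.const_smul 2))).raise (m := k + 1 + (k + 1 + (k + 1))) k (by omega)
  have hsum := (hlin.add ((h₁.mul h₃).const_smul 2)).add
    (h₂.mul ((h₁.mul h₁).sub (h₂.mul h₂)))
  have hcoeff := hsum.eq_zero_of_eventuallyEq_zero <| by
    filter_upwards [hsys] with t ht
    simp only [Pi.add_apply, Pi.mul_apply, Pi.sub_apply, Pi.smul_apply, Pi.zero_apply, smul_eq_mul]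
    linear_combination ht.2.2
  push_cast at hcoeff
  rw [indicialCoeff]
  linear_combination hcoeff

theorem exists_leadingTriple (hsys : CoupledRiccatiAt q qb f₁ f₂ f₃ x) (two_ne : (2 : 𝕜) ≠ 0)
    (hq : HasPoleCoeffAt q 1 (-η) x) (hqb : HasPoleCoeffAt qb 1 (-η) x)
    (m₁ : MeromorphicAt f₁ x) (m₂ : MeromorphicAt f₂ x) (m₃ : MeromorphicAt f₃ x)
    (h₁ : HasPoleCoeffAt f₁ (k + 1) a x) (h₂ : HasPoleCoeffAt f₂ (k + 1) b x) :
    ∃ c, HasPoleCoeffAt f₃ (k + 1 + (k + 1)) c x ∧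
      (a, b, c) ∈ leadingTriples (indicialCoeff η k) :=
  have h₃ := hsys.hasPoleCoeffAt_third two_ne hq hqb m₂ h₁ h₂
  ⟨_, h₃, mem_leadingTriples_of_indicial_equations two_ne
    (hsys.indicial_equation_first hq hqb m₁ h₁ h₂) rfl
    (hsys.indicial_equation_third hq hqb m₃ h₁ h₂ h₃)⟩

theorem exists_simple_poles (hsys : CoupledRiccatiAt q qb f₁ f₂ f₃ x) (two_ne : (2 : 𝕜) ≠ 0)
    (hq : HasPoleCoeffAt q 1 (-η) x) (hqb : HasPoleCoeffAt qb 1 (-η) x)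
    (m₁ : MeromorphicAt f₁ x) (m₂ : MeromorphicAt f₂ x) (m₃ : MeromorphicAt f₃ x)
    (h₁ : HasPoleCoeffAt f₁ (k + 1) a x) (h₂ : HasPoleCoeffAt f₂ (k + 1) b x) :
    ∃ a b, HasPoleCoeffAt f₁ 1 a x ∧ HasPoleCoeffAt f₂ 1 b x := by
  induction k generalizing a b with
  | zero => exact ⟨a, b, h₁, h₂⟩
  | succ k ih =>
    obtain ⟨c, -, hc⟩ := hsys.exists_leadingTriple two_ne hq hqb m₁ m₂ m₃ h₁ h₂
    have hcoeff : indicialCoeff η (k + 1) = 0 := by simp [indicialCoeff]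
    rw [hcoeff, leadingTriples_zero, Set.mem_singleton_iff, Prod.mk.injEq, Prod.mk.injEq] at hc
    obtain ⟨rfl, rfl, -⟩ := hc
    obtain ⟨a', h₁'⟩ := h₁.exists_lower m₁
    obtain ⟨b', h₂'⟩ := h₂.exists_lower m₂
    exact ih h₁' h₂'

end CoupledRiccatiAt

theorem stmt_8_general [CompleteSpace 𝕜] (two_ne : (2 : 𝕜) ≠ 0)
    (hq : HasPoleCoeffAt q 1 (-η) x) (hqb : HasPoleCoeffAt qb 1 (-η) x)
    (h₁ : MeromorphicAt f₁ x) (h₂ : MeromorphicAt f₂ x) (h₃ : MeromorphicAt f₃ x)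
    (hsys : CoupledRiccatiAt q qb f₁ f₂ f₃ x) :
    ∃ a b c, HasPoleCoeffAt f₁ 1 a x ∧ HasPoleCoeffAt f₂ 1 b x ∧ HasPoleCoeffAt f₃ 2 c x ∧
      (a, b, c) ∈ leadingTriples (η + 1) := by
  obtain ⟨n₁, a₁, hf₁⟩ := exists_hasPoleCoeffAt h₁
  obtain ⟨n₂, a₂, hf₂⟩ := exists_hasPoleCoeffAt h₂
  obtain ⟨a, b, ha, hb⟩ := hsys.exists_simple_poles (k := n₁ + n₂) two_ne hq hqb h₁ h₂ h₃
    (hf₁.raise (n₂ + 1) (by omega)) (hf₂.raise (n₁ + 1) (by omega))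
  obtain ⟨c, hc, habc⟩ := hsys.exists_leadingTriple (k := 0) two_ne hq hqb h₁ h₂ h₃ ha hb
  have hcoeff : indicialCoeff η 0 = η + 1 := by simp [indicialCoeff, add_comm]
  exact ⟨a, b, c, ha, hb, hc, hcoeff ▸ habc⟩

end CoupledRiccati

theorem hasPoleCoeffAt_riccatiQ (η : ℕ) {r : ℂ → ℂ} (hr : ContinuousAt r 0) :
    HasPoleCoeffAt (riccatiQ η r) 1 (-η) 0 := by
  have hlim : Tendsto (fun t ↦ -(η : ℂ) + t * r t) (𝓝[≠] 0) (𝓝 (-η)) := by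
    have hcont : ContinuousAt (fun t ↦ -(η : ℂ) + t * r t) 0 := by fun_prop
    simpa using hcont.tendsto.mono_left nhdsWithin_le_nhds
  refine hlim.congr' ?_
  filter_upwards [self_mem_nhdsWithin] with t (ht : t ≠ 0)
  rw [riccatiQ]
  field_simp
  ring

/-- classification of the leading behaviour at the origin of
meromorphic solutions of the coupled Riccati system. -/
theorem stmt_8 (η : ℕ) (r rb f₁ f₂ f₃ : ℂ → ℂ)
    (hr : AnalyticAt ℂ r 0) (hrb : AnalyticAt ℂ rb 0)
    (h₁ : MeromorphicAt f₁ 0) (h₂ : MeromorphicAt f₂ 0) (h₃ : MeromorphicAt f₃ 0)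
    (hsys : CoupledRiccatiSystem η r rb f₁ f₂ f₃) :
    ∃ a b c : ℂ,
      Tendsto (fun t => t * f₁ t) (𝓝[≠] (0 : ℂ)) (𝓝 a) ∧
      Tendsto (fun t => t * f₂ t) (𝓝[≠] (0 : ℂ)) (𝓝 b) ∧
      Tendsto (fun t => t ^ 2 * f₃ t) (𝓝[≠] (0 : ℂ)) (𝓝 c) ∧
      ((a = 0 ∧ b = 0 ∧ c = 0) ∨
       (a = 2 * ((η : ℂ) + 1) ∧ b = 0 ∧ c = 0) ∨
       (a = ((η : ℂ) + 1) / 2 ∧ b = ((η : ℂ) + 1) / 2 ∧ c = 0) ∨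
       (a = ((η : ℂ) + 1) / 2 ∧ b = -(((η : ℂ) + 1) / 2) ∧ c = 0) ∨
       (a = 3 * ((η : ℂ) + 1) / 2 ∧ b = ((η : ℂ) + 1) / 2 ∧ c = ((η : ℂ) + 1) ^ 2) ∨
       (a = 3 * ((η : ℂ) + 1) / 2 ∧ b = -(((η : ℂ) + 1) / 2) ∧
         c = -(((η : ℂ) + 1) ^ 2))) := by
  simpa [HasPoleCoeffAt, leadingTriples] using stmt_8_general two_ne_zero
    (hasPoleCoeffAt_riccatiQ η hr.continuousAt) (hasPoleCoeffAt_riccatiQ η hrb.continuousAt)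
    h₁ h₂ h₃ hsys
end

section
/- Let f₁, f₂, f₃ be functions meromorphic at 0 satisfying the coupled Riccati system on a punctured neighbourhood of 0, and suppose f₁, f₂ and f₃ are all analytic at 0. Then there exist functions h₁, h₂, h₃ analytic at 0 such that, for all t in a neighbourhood of 0, f₁(t) = t^η h₁(t), f₂(t) = t^η h₂(t) and f₃(t) = t^{2η} h₃(t). -/
open Filter Topology

/-!
If `f` is analytic at `z₀` with finite order `n` and `f' = c / (z - z₀) • f + u`, where `u` has
order at least `n`, then comparing the coefficients of `(z - z₀) ^ n` in `(z - z₀) • f'` gives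
`c = n`. Each Riccati equation has this form, with residue `η`, `η` or `2 * η`. Whichever of `f₁`
and `f₂` has the smaller order must therefore have order at least `η`: otherwise the remainder `u`
in its equation has at least the same order. Here `f₃`, which enters the second equation, does no
harm: its own equation is forced only by multiples of `f₂ ^ 2 - f₁ ^ 2`, so its order is at least
twice theirs, up to the bound `2 * η` given by the residue.
-/

section RegularSingularODE

variable {𝕜 E : Type*} [NontriviallyNormedField 𝕜] [NormedAddCommGroup E] [NormedSpace 𝕜 E]
  {z₀ c : 𝕜} {f g u : 𝕜 → E}

theorem eventually_sub_smul_deriv_eq_pow_smul {n : ℕ} (hg : ∀ᶠ z in 𝓝 z₀, DifferentiableAt 𝕜 g z)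
    (hfg : ∀ᶠ z in 𝓝 z₀, f z = (z - z₀) ^ n • g z) :
    ∀ᶠ z in 𝓝 z₀,
      (z - z₀) • deriv f z = (z - z₀) ^ n • ((n : 𝕜) • g z + (z - z₀) • deriv g z) := by
  filter_upwards [hfg.eventually_nhds, hg] with z hfz hgz
  have hpow : HasDerivAt (fun w ↦ (w - z₀) ^ n) (n * (z - z₀) ^ (n - 1)) z := by
    simpa using ((hasDerivAt_id z).sub_const z₀).fun_pow n
  have hderiv : deriv f z = (z - z₀) ^ n • deriv g z + (n * (z - z₀) ^ (n - 1)) • g z :=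
    (EventuallyEq.deriv_eq hfz).trans (hpow.smul hgz.hasDerivAt).deriv
  rw [hderiv]
  cases n with
  | zero => simp
  | succ n =>
    rw [Nat.add_sub_cancel]
    module

variable [CompleteSpace E]

theorem residue_eq_of_analyticOrderAt_eq {n : ℕ} (hf : AnalyticAt 𝕜 f z₀) (hu : AnalyticAt 𝕜 u z₀)
    (hode : ∀ᶠ z in 𝓝[≠] z₀, deriv f z = (c / (z - z₀)) • f z + u z)
    (hfn : analyticOrderAt f z₀ = n) (hun : n ≤ analyticOrderAt u z₀) : c = n := by
  obtain ⟨g, hg, hg₀, hfg⟩ := hf.analyticOrderAt_eq_natCast.mp hfn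
  obtain ⟨v, hv, huv⟩ := (natCast_le_analyticOrderAt hu).mp hun
  have hderiv := eventually_sub_smul_deriv_eq_pow_smul
    (hg.eventually_analyticAt.mono fun _ h ↦ h.differentiableAt) hfg
  have hpunctured : (fun z ↦ (n : 𝕜) • g z + (z - z₀) • deriv g z) =ᶠ[𝓝[≠] z₀]
      fun z ↦ c • g z + (z - z₀) • v z := by
    filter_upwards [hode, hfg.filter_mono nhdsWithin_le_nhds, huv.filter_mono nhdsWithin_le_nhds,
      hderiv.filter_mono nhdsWithin_le_nhds, self_mem_nhdsWithin] with z hode hfg huv hderiv hz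
    have hz : z - z₀ ≠ 0 := sub_ne_zero.mpr hz
    refine smul_right_injective E (pow_ne_zero n hz) ?_
    calc (z - z₀) ^ n • ((n : 𝕜) • g z + (z - z₀) • deriv g z)
      _ = (z - z₀) • ((c / (z - z₀)) • f z + u z) := by rw [← hderiv, hode]
      _ = c • f z + (z - z₀) • u z := by rw [smul_add, smul_smul, mul_div_cancel₀ c hz]
      _ = (z - z₀) ^ n • (c • g z + (z - z₀) • v z) := by rw [hfg, huv]; module
  have hleft : ContinuousAt (fun z ↦ (n : 𝕜) • g z + (z - z₀) • deriv g z) z₀ := by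
    have := hg.deriv.continuousAt
    fun_prop
  have hright : ContinuousAt (fun z ↦ c • g z + (z - z₀) • v z) z₀ := by fun_prop
  have hleading : (n : 𝕜) • g z₀ = c • g z₀ := by
    simpa using ((hleft.eventuallyEq_nhds_iff_eventuallyEq_nhdsNE hright).mp hpunctured).eq_of_nhds
  exact (smul_left_injective 𝕜 hg₀ hleading).symm

theorem le_analyticOrderAt_of_deriv_eq [CharZero 𝕜] {m : ℕ} {k : ℕ∞}
    (hf : AnalyticAt 𝕜 f z₀) (hu : AnalyticAt 𝕜 u z₀)
    (hode : ∀ᶠ z in 𝓝[≠] z₀, deriv f z = ((m : 𝕜) / (z - z₀)) • f z + u z)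
    (hkm : k ≤ m) (hku : min k (analyticOrderAt f z₀) ≤ analyticOrderAt u z₀) :
    k ≤ analyticOrderAt f z₀ := by
  by_contra! hfk
  rw [min_eq_right hfk.le] at hku
  have hfm := hfk.trans_le hkm
  lift analyticOrderAt f z₀ to ℕ using hfk.ne_top with n hn
  have hmn : (m : 𝕜) = n := residue_eq_of_analyticOrderAt_eq hf hu hode hn.symm hku
  exact hfm.ne (by rw [Nat.cast_injective hmn])

end RegularSingularODE

section AnalyticOrder

variable {𝕜 : Type*} [NontriviallyNormedField 𝕜] {z₀ : 𝕜} {n : ℕ∞} {a b f g : 𝕜 → 𝕜}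

theorem le_analyticOrderAt_mul_left (ha : AnalyticAt 𝕜 a z₀) (hf : AnalyticAt 𝕜 f z₀)
    (hn : n ≤ analyticOrderAt f z₀) : n ≤ analyticOrderAt (a * f) z₀ := by
  rw [analyticOrderAt_mul ha hf]
  exact hn.trans le_add_self

theorem le_analyticOrderAt_mul_add_mul (ha : AnalyticAt 𝕜 a z₀) (hb : AnalyticAt 𝕜 b z₀)
    (hf : AnalyticAt 𝕜 f z₀) (hg : AnalyticAt 𝕜 g z₀)
    (hfn : n ≤ analyticOrderAt f z₀) (hgn : n ≤ analyticOrderAt g z₀) :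
    n ≤ analyticOrderAt (a * f + b * g) z₀ :=
  (le_min (le_analyticOrderAt_mul_left ha hf hfn)
    (le_analyticOrderAt_mul_left hb hg hgn)).trans le_analyticOrderAt_add

end AnalyticOrder

namespace CoupledRiccatiSystem

variable {η : ℕ} {r rb f₁ f₂ f₃ : ℂ → ℂ}

theorem deriv_fst (hsys : CoupledRiccatiSystem η r rb f₁ f₂ f₃) :
    ∀ᶠ t in 𝓝[≠] 0, deriv f₁ t = ((η : ℂ) / (t - 0)) • f₁ t +
      ((-1 / 2 : ℂ) • (f₁ + r + rb) * f₁ + (-1 / 2 : ℂ) • ((3 : ℂ) • f₂ + r - rb) * f₂) t := by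
  filter_upwards [hsys] with t ⟨h, _, _⟩
  simp only [riccatiQ] at h
  simp only [sub_zero, Pi.add_apply, Pi.sub_apply, Pi.mul_apply, Pi.smul_apply, smul_eq_mul]
  linear_combination h / 2

theorem deriv_snd (hsys : CoupledRiccatiSystem η r rb f₁ f₂ f₃) :
    ∀ᶠ t in 𝓝[≠] 0, deriv f₂ t = ((η : ℂ) / (t - 0)) • f₂ t +
      ((-1 / 2 : ℂ) • (r - rb) * f₁ + (-1 / 2 : ℂ) • ((4 : ℂ) • f₁ + r + rb) * f₂ + f₃) t := by
  filter_upwards [hsys] with t ⟨_, h, _⟩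
  simp only [riccatiQ] at h
  simp only [sub_zero, Pi.add_apply, Pi.sub_apply, Pi.mul_apply, Pi.smul_apply, smul_eq_mul]
  linear_combination h / 2

theorem deriv_thd (hsys : CoupledRiccatiSystem η r rb f₁ f₂ f₃) :
    ∀ᶠ t in 𝓝[≠] 0, deriv f₃ t = (((2 * η : ℕ) : ℂ) / (t - 0)) • f₃ t +
      (-(f₁ + r + rb) * f₃ + (1 / 2 : ℂ) • f₂ * (f₂ ^ 2 - f₁ ^ 2)) t := by
  filter_upwards [hsys] with t ⟨_, _, h⟩
  simp only [riccatiQ] at h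
  simp only [sub_zero, Pi.add_apply, Pi.sub_apply, Pi.neg_apply, Pi.mul_apply, Pi.pow_apply,
    Pi.smul_apply, smul_eq_mul]
  push_cast
  linear_combination h / 2

theorem two_mul_le_analyticOrderAt_thd {k : ℕ∞} (hsys : CoupledRiccatiSystem η r rb f₁ f₂ f₃)
    (hr : AnalyticAt ℂ r 0) (hrb : AnalyticAt ℂ rb 0)
    (h₁ : AnalyticAt ℂ f₁ 0) (h₂ : AnalyticAt ℂ f₂ 0) (h₃ : AnalyticAt ℂ f₃ 0)
    (hkη : k ≤ η) (hk₁ : k ≤ analyticOrderAt f₁ 0) (hk₂ : k ≤ analyticOrderAt f₂ 0) :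
    2 * k ≤ analyticOrderAt f₃ 0 := by
  have two_mul_le_sq {f : ℂ → ℂ} (hf : AnalyticAt ℂ f 0) (hk : k ≤ analyticOrderAt f 0) :
      2 * k ≤ analyticOrderAt (f ^ 2) 0 := by
    rw [analyticOrderAt_pow hf, nsmul_eq_mul]
    gcongr
    rfl
  have hquadratic : 2 * k ≤ analyticOrderAt (f₂ ^ 2 - f₁ ^ 2) 0 :=
    (le_min (two_mul_le_sq h₂ hk₂) (two_mul_le_sq h₁ hk₁)).trans le_analyticOrderAt_sub
  refine le_analyticOrderAt_of_deriv_eq h₃ (by fun_prop) hsys.deriv_thd ?_ ?_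
  · push_cast
    gcongr
  · exact le_analyticOrderAt_mul_add_mul (by fun_prop) (by fun_prop) h₃ (by fun_prop)
      (min_le_right _ _) ((min_le_left _ _).trans hquadratic)

theorem le_analyticOrderAt_fst_of_le (hsys : CoupledRiccatiSystem η r rb f₁ f₂ f₃)
    (hr : AnalyticAt ℂ r 0) (hrb : AnalyticAt ℂ rb 0)
    (h₁ : AnalyticAt ℂ f₁ 0) (h₂ : AnalyticAt ℂ f₂ 0)
    (h₁₂ : analyticOrderAt f₁ 0 ≤ analyticOrderAt f₂ 0) : η ≤ analyticOrderAt f₁ 0 :=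
  le_analyticOrderAt_of_deriv_eq h₁ (by fun_prop) hsys.deriv_fst le_rfl <|
    (min_le_right _ _).trans <|
      le_analyticOrderAt_mul_add_mul (by fun_prop) (by fun_prop) h₁ h₂ le_rfl h₁₂

theorem le_analyticOrderAt_snd_of_le (hsys : CoupledRiccatiSystem η r rb f₁ f₂ f₃)
    (hr : AnalyticAt ℂ r 0) (hrb : AnalyticAt ℂ rb 0)
    (h₁ : AnalyticAt ℂ f₁ 0) (h₂ : AnalyticAt ℂ f₂ 0) (h₃ : AnalyticAt ℂ f₃ 0)
    (h₂₁ : analyticOrderAt f₂ 0 ≤ analyticOrderAt f₁ 0) : η ≤ analyticOrderAt f₂ 0 := by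
  set k := min (η : ℕ∞) (analyticOrderAt f₂ 0)
  have hk₂ : k ≤ analyticOrderAt f₂ 0 := min_le_right _ _
  have hk₁ : k ≤ analyticOrderAt f₁ 0 := hk₂.trans h₂₁
  have hk₃ : k ≤ analyticOrderAt f₃ 0 := calc
    k ≤ 2 * k := le_mul_of_one_le_left' one_le_two
    _ ≤ analyticOrderAt f₃ 0 :=
      hsys.two_mul_le_analyticOrderAt_thd hr hrb h₁ h₂ h₃ (min_le_left _ _) hk₁ hk₂
  have hlinear := le_analyticOrderAt_mul_add_mul (a := (-1 / 2 : ℂ) • (r - rb))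
    (b := (-1 / 2 : ℂ) • ((4 : ℂ) • f₁ + r + rb)) (by fun_prop) (by fun_prop) h₁ h₂ hk₁ hk₂
  exact le_analyticOrderAt_of_deriv_eq h₂ (by fun_prop) hsys.deriv_snd le_rfl
    ((le_min hlinear hk₃).trans le_analyticOrderAt_add)

theorem le_min_analyticOrderAt (hsys : CoupledRiccatiSystem η r rb f₁ f₂ f₃)
    (hr : AnalyticAt ℂ r 0) (hrb : AnalyticAt ℂ rb 0)
    (h₁ : AnalyticAt ℂ f₁ 0) (h₂ : AnalyticAt ℂ f₂ 0) (h₃ : AnalyticAt ℂ f₃ 0) :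
    η ≤ min (analyticOrderAt f₁ 0) (analyticOrderAt f₂ 0) := by
  rcases le_total (analyticOrderAt f₁ 0) (analyticOrderAt f₂ 0) with h₁₂ | h₂₁
  · rw [min_eq_left h₁₂]
    exact hsys.le_analyticOrderAt_fst_of_le hr hrb h₁ h₂ h₁₂
  · rw [min_eq_right h₂₁]
    exact hsys.le_analyticOrderAt_snd_of_le hr hrb h₁ h₂ h₃ h₂₁

end CoupledRiccatiSystem

/-- analytic solutions of the coupled Riccati system vanish to
order η (resp. 2η for the third component) at the origin. -/
theorem stmt_9 (η : ℕ) (r rb f₁ f₂ f₃ : ℂ → ℂ)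
    (hr : AnalyticAt ℂ r 0) (hrb : AnalyticAt ℂ rb 0)
    (h₁ : AnalyticAt ℂ f₁ 0) (h₂ : AnalyticAt ℂ f₂ 0) (h₃ : AnalyticAt ℂ f₃ 0)
    (hsys : CoupledRiccatiSystem η r rb f₁ f₂ f₃) :
    ∃ h₁' h₂' h₃' : ℂ → ℂ,
      AnalyticAt ℂ h₁' 0 ∧ AnalyticAt ℂ h₂' 0 ∧ AnalyticAt ℂ h₃' 0 ∧
      ∀ᶠ t in 𝓝 (0 : ℂ),
        f₁ t = t ^ η * h₁' t ∧ f₂ t = t ^ η * h₂' t ∧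
          f₃ t = t ^ (2 * η) * h₃' t := by
  obtain ⟨hη₁, hη₂⟩ := le_min_iff.mp (hsys.le_min_analyticOrderAt hr hrb h₁ h₂ h₃)
  have hη₃ : ((2 * η : ℕ) : ℕ∞) ≤ analyticOrderAt f₃ 0 := by
    exact_mod_cast hsys.two_mul_le_analyticOrderAt_thd hr hrb h₁ h₂ h₃ le_rfl hη₁ hη₂
  obtain ⟨g₁, hg₁, hfg₁⟩ := (natCast_le_analyticOrderAt h₁).mp hη₁
  obtain ⟨g₂, hg₂, hfg₂⟩ := (natCast_le_analyticOrderAt h₂).mp hη₂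
  obtain ⟨g₃, hg₃, hfg₃⟩ := (natCast_le_analyticOrderAt h₃).mp hη₃
  simp only [sub_zero, smul_eq_mul] at hfg₁ hfg₂ hfg₃
  exact ⟨g₁, g₂, g₃, hg₁, hg₂, hg₃, hfg₁.and (hfg₂.and hfg₃)⟩
end

section
/- Let (f₁, f₂, f₃) and (g₁, g₂, g₃) be two triples of functions meromorphic at 0, each satisfying the coupled Riccati system on a punctured neighbourhood of 0, and suppose that the functions t ↦ f₁(t) − 2(η+1)/t and t ↦ g₁(t) − 2(η+1)/t are analytic at 0, that f₂ and g₂ are analytic at 0, and that f₃ and g₃ have at most simple poles at 0. Then fᵢ(t) = gᵢ(t) for i = 1, 2, 3 and for all t in some punctured neighbourhood of 0; i.e. the singular solution with leading behaviour (a,b,c) = (2(η+1), 0, 0) is unique. -/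
open Filter Topology

/-!
With weights `1, 1, 2` for `f₁, f₂, f₃`, the system reads `t x' = V((t q, t q̄), x)` for the triple
`x = (t f₁, t f₂, t² f₃)`, with `V` polynomial. Two solutions with the same limit at `0` have a
difference `d` satisfying `t d' = L d + o(d)`, where `L` is the derivative of `V` in `x` at that
limit. Comparing leading terms, the order of `d` at `0`, if finite, is an eigenvalue of `L`, and it
is positive because `d → 0`. At `(2μ, 0, 0)` with `μ = η + 1`, the eigenvalues of `L` are
`-μ, -μ, -2μ`, none of which is a positive integer.
-/

theorem tendsto_self_mul_of_eventually_eq_div_add {𝕜 : Type*} [NormedField 𝕜] {f k : 𝕜 → 𝕜}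
    {c : 𝕜} (hk : ContinuousAt k 0) (hf : ∀ᶠ t in 𝓝[≠] 0, f t = c / t + k t) :
    Tendsto (fun t => t * f t) (𝓝[≠] 0) (𝓝 c) := by
  have hlim : Tendsto (fun t => c + t * k t) (𝓝[≠] 0) (𝓝 c) := by
    have : ContinuousAt (fun t => c + t * k t) 0 := by fun_prop
    simpa using this.tendsto.mono_left nhdsWithin_le_nhds
  refine hlim.congr' ?_
  filter_upwards [hf, self_mem_nhdsWithin] with t hft (ht : t ≠ 0)
  rw [hft, mul_add, mul_div_cancel₀ c ht]

section Euler

variable {𝕜 P E F : Type*} [NontriviallyNormedField 𝕜]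
  [NormedAddCommGroup P] [NormedSpace 𝕜 P] [NormedAddCommGroup E] [NormedSpace 𝕜 E]
  [NormedAddCommGroup F] [NormedSpace 𝕜 F]

theorem meromorphicAt_prodMk {f : 𝕜 → E} {g : 𝕜 → F} {z : 𝕜}
    (hf : MeromorphicAt f z) (hg : MeromorphicAt g z) :
    MeromorphicAt (fun t => (f t, g t)) z := by
  obtain ⟨m, hm⟩ := hf
  obtain ⟨n, hn⟩ := hg
  refine ⟨m + n, ?_⟩
  have hpow (k : ℕ) : AnalyticAt 𝕜 (fun t => (t - z) ^ k) z := by fun_prop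
  refine (((hpow n).smul hm).prod ((hpow m).smul hn)).congr (.of_forall fun t => ?_)
  simp [smul_smul, pow_add, mul_comm]

theorem hasDerivAt_zpow_smul {f : 𝕜 → E} {t : 𝕜} (n : ℤ) (ht : t ≠ 0)
    (hf : DifferentiableAt 𝕜 f t) :
    HasDerivAt (fun s => s ^ n • f s) (t⁻¹ • t ^ n • ((n : 𝕜) • f t + t • deriv f t)) t := by
  convert (hasDerivAt_zpow n t (Or.inl ht)).fun_smul hf.hasDerivAt using 1
  simp only [zpow_sub_one₀ ht, smul_add, smul_smul]
  rw [add_comm]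
  congr 2 <;> field_simp

theorem hasEigenvalue_of_meromorphicOrderAt_eq [CompleteSpace E] {x : 𝕜 → E} {L : E →L[𝕜] E}
    {n : ℤ} (hx : MeromorphicAt x 0) (hn : meromorphicOrderAt x 0 = n)
    (hL : (fun t => t • deriv x t - L (x t)) =o[𝓝[≠] 0] x) :
    Module.End.HasEigenvalue (L : Module.End 𝕜 E) (n : 𝕜) := by
  obtain ⟨g, hg, hg0, hxg⟩ := (meromorphicOrderAt_eq_int_iff hx).mp hn
  simp only [sub_zero] at hxg
  set R : 𝕜 → E := fun t => (n : 𝕜) • g t + t • deriv g t - L (g t) with hR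
  have hgcont := hg.continuousAt
  have hRcont : ContinuousAt R 0 := by
    have hdgcont := hg.deriv.continuousAt
    fun_prop
  have hRg : R =o[𝓝[≠] 0] g := by
    have hmul : (fun t => t ^ n • R t) =o[𝓝[≠] 0] fun t => t ^ n • g t := by
      refine hL.congr' ?_ hxg
      filter_upwards [hxg, EventuallyEq.nhdsNE_deriv hxg, self_mem_nhdsWithin,
        hg.eventually_analyticAt.filter_mono nhdsWithin_le_nhds] with t hxt hdxt (ht : t ≠ 0) hgt
      rw [hxt, hdxt, (hasDerivAt_zpow_smul n ht hgt.differentiableAt).deriv, smul_inv_smul₀ ht,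
        map_smul, ← smul_sub]
    refine Asymptotics.IsLittleO.of_bound fun c hc => ?_
    filter_upwards [hmul.bound hc, self_mem_nhdsWithin] with t hbound (ht : t ≠ 0)
    rw [norm_smul, norm_smul, mul_left_comm] at hbound
    exact le_of_mul_le_mul_left hbound (norm_pos_iff.mpr (zpow_ne_zero n ht))
  have hR0 : R 0 = 0 :=
    tendsto_nhds_unique (hRcont.tendsto.mono_left nhdsWithin_le_nhds) <|
      (Asymptotics.isLittleO_one_iff 𝕜).mp <|
        hRg.trans_isBigO ((hgcont.tendsto.mono_left nhdsWithin_le_nhds).isBigO_one 𝕜)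
  refine Module.End.hasEigenvalue_of_hasEigenvector (x := g 0) ⟨?_, hg0⟩
  rw [Module.End.mem_eigenspace_iff]
  exact (sub_eq_zero.mp (by simpa [hR] using hR0)).symm

theorem eventually_eq_zero_of_smul_deriv_sub_isLittleO [CompleteSpace E] {x : 𝕜 → E}
    {L : E →L[𝕜] E} (hx : MeromorphicAt x 0) (hx0 : Tendsto x (𝓝[≠] 0) (𝓝 0))
    (hL : (fun t => t • deriv x t - L (x t)) =o[𝓝[≠] 0] x)
    (heig : ∀ n : ℕ, 0 < n → ¬ Module.End.HasEigenvalue (L : Module.End 𝕜 E) (n : 𝕜)) :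
    ∀ᶠ t in 𝓝[≠] 0, x t = 0 := by
  rw [← meromorphicOrderAt_eq_top_iff]
  by_contra htop
  obtain ⟨n, hn⟩ := WithTop.ne_top_iff_exists.mp htop
  have hpos := (tendsto_zero_iff_meromorphicOrderAt_pos hx).mp hx0
  rw [← hn] at hpos
  have hpos : 0 < n := by exact_mod_cast hpos
  lift n to ℕ using hpos.le
  exact heig n (by exact_mod_cast hpos)
    (by simpa using hasEigenvalue_of_meromorphicOrderAt_eq hx hn.symm hL)

theorem eventuallyEq_of_smul_deriv_eq [CompleteSpace E] {V : P → E → E} {V' : P × E →L[𝕜] E}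
    {s : 𝕜 → P} {s₀ : P} {x y : 𝕜 → E} {p : E}
    (hV : HasStrictFDerivAt (fun q : P × E => V q.1 q.2) V' (s₀, p))
    (heig : ∀ n : ℕ, 0 < n →
      ¬ Module.End.HasEigenvalue (V' ∘L .inr 𝕜 P E : Module.End 𝕜 E) (n : 𝕜))
    (hs : Tendsto s (𝓝[≠] 0) (𝓝 s₀))
    (hx : MeromorphicAt x 0) (hxp : Tendsto x (𝓝[≠] 0) (𝓝 p))
    (hxV : ∀ᶠ t in 𝓝[≠] 0, t • deriv x t = V (s t) (x t))
    (hy : MeromorphicAt y 0) (hyp : Tendsto y (𝓝[≠] 0) (𝓝 p))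
    (hyV : ∀ᶠ t in 𝓝[≠] 0, t • deriv y t = V (s t) (y t)) :
    x =ᶠ[𝓝[≠] 0] y := by
  have hlim : Tendsto (fun t => ((s t, x t), (s t, y t))) (𝓝[≠] 0) (𝓝 ((s₀, p), (s₀, p))) :=
    (hs.prodMk_nhds hxp).prodMk_nhds (hs.prodMk_nhds hyp)
  have hlinear : (fun t => t • deriv (x - y) t - (V' ∘L .inr 𝕜 P E) ((x - y) t))
      =o[𝓝[≠] 0] (x - y) := by
    rw [← Asymptotics.isLittleO_norm_right]
    refine (hV.isLittleO.comp_tendsto hlim).norm_right.congr' ?_ ?_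
    · filter_upwards [hxV, hyV, hx.eventually_analyticAt, hy.eventually_analyticAt]
        with t hxt hyt hxan hyan
      rw [deriv_sub hxan.differentiableAt hyan.differentiableAt, smul_sub, hxt, hyt]
      simp only [Function.comp_apply, ContinuousLinearMap.comp_apply, ContinuousLinearMap.inr_apply,
        Pi.sub_apply, Prod.mk_sub_mk, sub_self]
    · exact .of_forall fun t => by simp [Prod.norm_def]
  filter_upwards [eventually_eq_zero_of_smul_deriv_sub_isLittleO (hx.sub hy)
    (by simpa [Pi.sub_def] using hxp.sub hyp) hlinear heig] with t ht
  exact sub_eq_zero.mp ht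

end Euler

/-- The coupled Riccati system with arbitrary coefficient functions `q` and `qb` (for `q̄`), imposed
on a punctured neighbourhood of the origin. -/
def IsCoupledRiccatiSolution (q qb f₁ f₂ f₃ : ℂ → ℂ) : Prop :=
  ∀ᶠ t in 𝓝[≠] (0 : ℂ),
    2 * deriv f₁ t + f₁ t ^ 2 + 3 * f₂ t ^ 2 + (q t + qb t) * f₁ t + (q t - qb t) * f₂ t = 0 ∧
    2 * deriv f₂ t + 4 * f₁ t * f₂ t - 2 * f₃ t
      + (q t + qb t) * f₂ t + (q t - qb t) * f₁ t = 0 ∧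
    2 * deriv f₃ t + 2 * f₁ t * f₃ t + f₂ t * (f₁ t ^ 2 - f₂ t ^ 2)
      + 2 * (q t + qb t) * f₃ t = 0

/-- Assigning the weights `1, 1, 2` to `f₁, f₂, f₃` and `1, 1` to `q, q̄` makes the
coupled Riccati system quasi-homogeneous; this is the triple `(t f₁, t f₂, t² f₃)`. -/
def rescaledTriple (f₁ f₂ f₃ : ℂ → ℂ) (t : ℂ) : ℂ × ℂ × ℂ :=
  (t * f₁ t, t * f₂ t, t ^ 2 * f₃ t)

/-- The vector field `V` for which the coupled Riccati system reads `t x' = V(s, x)`, where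
`x` is the rescaled triple and `s = (t q, t q̄)`. -/
noncomputable def rescaledRiccatiField (s : ℂ × ℂ) (x : ℂ × ℂ × ℂ) : ℂ × ℂ × ℂ :=
  (x.1 - (x.1 ^ 2 + 3 * x.2.1 ^ 2 + (s.1 + s.2) * x.1 + (s.1 - s.2) * x.2.1) / 2,
   x.2.1 - (4 * x.1 * x.2.1 - 2 * x.2.2 + (s.1 + s.2) * x.2.1 + (s.1 - s.2) * x.1) / 2,
   2 * x.2.2 - (2 * x.1 * x.2.2 + x.2.1 * (x.1 ^ 2 - x.2.1 ^ 2) + 2 * (s.1 + s.2) * x.2.2) / 2)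

theorem contDiff_rescaledRiccatiField {n : WithTop ℕ∞} :
    ContDiff ℂ n (fun q : (ℂ × ℂ) × (ℂ × ℂ × ℂ) => rescaledRiccatiField q.1 q.2) := by
  unfold rescaledRiccatiField
  fun_prop

theorem fderiv_rescaledRiccatiField_inr (η : ℂ) (v : ℂ × ℂ × ℂ) :
    fderiv ℂ (fun q : (ℂ × ℂ) × (ℂ × ℂ × ℂ) => rescaledRiccatiField q.1 q.2)
        ((-η, -η), (2 * (η + 1), 0, 0)) (0, v) =
      (-(η + 1) * v.1, -3 * (η + 1) * v.2.1 + v.2.2, -2 * (η + 1) ^ 2 * v.2.1) := by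
  obtain ⟨u, v, w⟩ := v
  rw [← ((contDiff_rescaledRiccatiField (n := 1)).differentiable one_ne_zero _).lineDeriv_eq_fderiv]
  refine HasDerivAt.deriv ?_
  have hu : HasDerivAt (fun τ => 2 * (η + 1) + τ * u) u 0 := by
    simpa using ((hasDerivAt_id (0 : ℂ)).mul_const u).const_add (2 * (η + 1))
  have hv : HasDerivAt (fun τ => τ * v) v 0 := by simpa using (hasDerivAt_id (0 : ℂ)).mul_const v
  have hw : HasDerivAt (fun τ => τ * w) w 0 := by simpa using (hasDerivAt_id (0 : ℂ)).mul_const w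
  simp only [rescaledRiccatiField, Prod.smul_mk, Prod.mk_add_mk, smul_eq_mul, smul_zero, add_zero,
    zero_add]
  refine .prodMk ?_ (.prodMk ?_ ?_)
  · refine (hu.fun_sub (((((hu.fun_pow 2).fun_add ((hv.fun_pow 2).const_mul 3)).fun_add
      (hu.const_mul _)).fun_add (hv.const_mul _)).div_const 2)).congr_deriv ?_
    push_cast
    ring
  · refine (hv.fun_sub ((((((hu.const_mul 4).fun_mul hv).fun_sub (hw.const_mul 2)).fun_add
      (hv.const_mul _)).fun_add (hu.const_mul _)).div_const 2)).congr_deriv ?_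
    ring
  · refine ((hw.const_mul 2).fun_sub (((((hu.const_mul 2).fun_mul hw).fun_add
      (hv.fun_mul ((hu.fun_pow 2).fun_sub (hv.fun_pow 2)))).fun_add
      (hw.const_mul _)).div_const 2)).congr_deriv ?_
    push_cast
    ring

theorem not_hasEigenvalue_fderiv_rescaledRiccatiField {η : ℂ} {n : ℂ}
    (hn : n + (η + 1) ≠ 0) (hn2 : n + 2 * (η + 1) ≠ 0) :
    ¬ Module.End.HasEigenvalue
      (fderiv ℂ (fun q : (ℂ × ℂ) × (ℂ × ℂ × ℂ) => rescaledRiccatiField q.1 q.2)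
        ((-η, -η), (2 * (η + 1), 0, 0)) ∘L .inr ℂ (ℂ × ℂ) (ℂ × ℂ × ℂ) :
          Module.End ℂ (ℂ × ℂ × ℂ)) n := by
  intro h
  obtain ⟨⟨u, v, w⟩, hv⟩ := h.exists_hasEigenvector
  have happly := hv.apply_eq_smul
  simp only [ContinuousLinearMap.coe_coe, ContinuousLinearMap.comp_apply,
    ContinuousLinearMap.inr_apply, fderiv_rescaledRiccatiField_inr, Prod.smul_mk, smul_eq_mul,
    Prod.mk.injEq] at happly
  obtain ⟨h₁, h₂, h₃⟩ := happly
  have hu : u = 0 := by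
    have : (n + (η + 1)) * u = 0 := by linear_combination -h₁
    exact (mul_eq_zero.mp this).resolve_left hn
  have hv0 : v = 0 := by
    have : ((n + (η + 1)) * (n + 2 * (η + 1))) * v = 0 := by
      linear_combination -n * h₂ - h₃
    exact (mul_eq_zero.mp this).resolve_left (mul_ne_zero hn hn2)
  have hw : w = 0 := by simpa [hv0] using h₂
  exact hv.2 (by simp [hu, hv0, hw])

theorem meromorphicAt_rescaledTriple {f₁ f₂ f₃ : ℂ → ℂ} (hf₁ : MeromorphicAt f₁ 0)
    (hf₂ : MeromorphicAt f₂ 0) (hf₃ : MeromorphicAt f₃ 0) :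
    MeromorphicAt (rescaledTriple f₁ f₂ f₃) 0 :=
  meromorphicAt_prodMk (by fun_prop) (meromorphicAt_prodMk (by fun_prop) (by fun_prop))

theorem IsCoupledRiccatiSolution.smul_deriv_rescaledTriple {q qb f₁ f₂ f₃ : ℂ → ℂ}
    (h : IsCoupledRiccatiSolution q qb f₁ f₂ f₃) (hf₁ : MeromorphicAt f₁ 0)
    (hf₂ : MeromorphicAt f₂ 0) (hf₃ : MeromorphicAt f₃ 0) :
    ∀ᶠ t in 𝓝[≠] (0 : ℂ), t • deriv (rescaledTriple f₁ f₂ f₃) t =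
      rescaledRiccatiField (t * q t, t * qb t) (rescaledTriple f₁ f₂ f₃ t) := by
  filter_upwards [h, hf₁.eventually_analyticAt, hf₂.eventually_analyticAt,
    hf₃.eventually_analyticAt] with t ⟨h₁, h₂, h₃⟩ ha₁ ha₂ ha₃
  have hid := hasDerivAt_id' t
  have hderiv : HasDerivAt (rescaledTriple f₁ f₂ f₃) _ t :=
    (hid.fun_mul ha₁.differentiableAt.hasDerivAt).prodMk
      ((hid.fun_mul ha₂.differentiableAt.hasDerivAt).prodMk
        ((hid.fun_pow 2).fun_mul ha₃.differentiableAt.hasDerivAt))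
  rw [hderiv.deriv]
  simp only [rescaledTriple, rescaledRiccatiField, Prod.smul_mk, smul_eq_mul, Prod.mk.injEq]
  push_cast
  refine ⟨?_, ?_, ?_⟩
  · linear_combination t ^ 2 / 2 * h₁
  · linear_combination t ^ 2 / 2 * h₂
  · linear_combination t ^ 3 / 2 * h₃

theorem tendsto_rescaledTriple {f₁ f₂ f₃ : ℂ → ℂ} {a b c : ℂ}
    (hf₁ : Tendsto (fun t => t * f₁ t) (𝓝[≠] 0) (𝓝 a))
    (hf₂ : Tendsto (fun t => t * f₂ t) (𝓝[≠] 0) (𝓝 b))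
    (hf₃ : Tendsto (fun t => t * f₃ t) (𝓝[≠] 0) (𝓝 c)) :
    Tendsto (rescaledTriple f₁ f₂ f₃) (𝓝[≠] 0) (𝓝 (a, b, 0)) := by
  have hid : Tendsto (fun t : ℂ => t) (𝓝[≠] 0) (𝓝 0) := nhdsWithin_le_nhds
  have hf₃' : Tendsto (fun t => t ^ 2 * f₃ t) (𝓝[≠] 0) (𝓝 0) := by
    simpa [sq, mul_assoc] using hid.mul hf₃
  exact hf₁.prodMk_nhds (hf₂.prodMk_nhds hf₃')

theorem tendsto_rescaledTriple_of_regular {f₁ f₂ f₃ : ℂ → ℂ} {a : ℂ}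
    (hf₁ : ∃ k : ℂ → ℂ, AnalyticAt ℂ k 0 ∧ ∀ᶠ t in 𝓝[≠] (0 : ℂ), f₁ t = a / t + k t)
    (hf₂ : ∃ k : ℂ → ℂ, AnalyticAt ℂ k 0 ∧ ∀ᶠ t in 𝓝[≠] (0 : ℂ), f₂ t = k t)
    (hf₃ : ∃ c : ℂ, Tendsto (fun t => t * f₃ t) (𝓝[≠] (0 : ℂ)) (𝓝 c)) :
    Tendsto (rescaledTriple f₁ f₂ f₃) (𝓝[≠] 0) (𝓝 (a, 0, 0)) := by
  obtain ⟨k₁, hk₁, hf₁⟩ := hf₁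
  obtain ⟨k₂, hk₂, hf₂⟩ := hf₂
  obtain ⟨c, hf₃⟩ := hf₃
  exact tendsto_rescaledTriple
    (tendsto_self_mul_of_eventually_eq_div_add hk₁.continuousAt hf₁)
    (tendsto_self_mul_of_eventually_eq_div_add hk₂.continuousAt (by simpa using hf₂)) hf₃

theorem tendsto_self_mul_riccatiQ (η : ℕ) {r : ℂ → ℂ} (hr : ContinuousAt r 0) :
    Tendsto (fun t => t * riccatiQ η r t) (𝓝[≠] 0) (𝓝 (-η)) :=
  tendsto_self_mul_of_eventually_eq_div_add hr (.of_forall fun _ => rfl)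

theorem stmt_10_general {η : ℂ} (hη : ∀ n : ℕ, 0 < n → (n : ℂ) + 2 * (η + 1) ≠ 0)
    {q qb f₁ f₂ f₃ g₁ g₂ g₃ : ℂ → ℂ}
    (hq : Tendsto (fun t => t * q t) (𝓝[≠] 0) (𝓝 (-η)))
    (hqb : Tendsto (fun t => t * qb t) (𝓝[≠] 0) (𝓝 (-η)))
    (hf₁ : MeromorphicAt f₁ 0) (hf₂ : MeromorphicAt f₂ 0) (hf₃ : MeromorphicAt f₃ 0)
    (hg₁ : MeromorphicAt g₁ 0) (hg₂ : MeromorphicAt g₂ 0) (hg₃ : MeromorphicAt g₃ 0)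
    (hf : IsCoupledRiccatiSolution q qb f₁ f₂ f₃)
    (hg : IsCoupledRiccatiSolution q qb g₁ g₂ g₃)
    (hf₀ : Tendsto (rescaledTriple f₁ f₂ f₃) (𝓝[≠] 0) (𝓝 (2 * (η + 1), 0, 0)))
    (hg₀ : Tendsto (rescaledTriple g₁ g₂ g₃) (𝓝[≠] 0) (𝓝 (2 * (η + 1), 0, 0))) :
    ∀ᶠ t in 𝓝[≠] (0 : ℂ), f₁ t = g₁ t ∧ f₂ t = g₂ t ∧ f₃ t = g₃ t := by
  have hV := contDiff_rescaledRiccatiField.contDiffAt.hasStrictFDerivAt (n := 1) one_ne_zero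
    (x := ((-η, -η), (2 * (η + 1), 0, 0)))
  have hη' (n : ℕ) (hn : 0 < n) : (n : ℂ) + (η + 1) ≠ 0 := fun h0 =>
    hη (2 * n) (by positivity) (by push_cast; linear_combination 2 * h0)
  have hspec (n : ℕ) (hn : 0 < n) :=
    not_hasEigenvalue_fderiv_rescaledRiccatiField (hη' n hn) (hη n hn)
  filter_upwards [eventuallyEq_of_smul_deriv_eq hV hspec (hq.prodMk_nhds hqb)
    (meromorphicAt_rescaledTriple hf₁ hf₂ hf₃) hf₀ (hf.smul_deriv_rescaledTriple hf₁ hf₂ hf₃)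
    (meromorphicAt_rescaledTriple hg₁ hg₂ hg₃) hg₀ (hg.smul_deriv_rescaledTriple hg₁ hg₂ hg₃),
    self_mem_nhdsWithin] with t heq (ht : t ≠ 0)
  simpa [rescaledTriple, ht] using heq

/-- uniqueness of the singular solution of the coupled Riccati
system with leading behaviour (a,b,c) = (2(η+1), 0, 0) at the origin. -/
theorem stmt_10 (η : ℕ) (r rb f₁ f₂ f₃ g₁ g₂ g₃ : ℂ → ℂ)
    (hr : AnalyticAt ℂ r 0) (hrb : AnalyticAt ℂ rb 0)
    (hf₁ : MeromorphicAt f₁ 0) (hf₂ : MeromorphicAt f₂ 0)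
    (hf₃ : MeromorphicAt f₃ 0)
    (hg₁ : MeromorphicAt g₁ 0) (hg₂ : MeromorphicAt g₂ 0)
    (hg₃ : MeromorphicAt g₃ 0)
    (hsysf : CoupledRiccatiSystem η r rb f₁ f₂ f₃)
    (hsysg : CoupledRiccatiSystem η r rb g₁ g₂ g₃)
    (hf₁' : ∃ k : ℂ → ℂ, AnalyticAt ℂ k 0 ∧
      ∀ᶠ t in 𝓝[≠] (0 : ℂ), f₁ t = 2 * ((η : ℂ) + 1) / t + k t)
    (hg₁' : ∃ k : ℂ → ℂ, AnalyticAt ℂ k 0 ∧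
      ∀ᶠ t in 𝓝[≠] (0 : ℂ), g₁ t = 2 * ((η : ℂ) + 1) / t + k t)
    (hf₂' : ∃ k : ℂ → ℂ, AnalyticAt ℂ k 0 ∧ ∀ᶠ t in 𝓝[≠] (0 : ℂ), f₂ t = k t)
    (hg₂' : ∃ k : ℂ → ℂ, AnalyticAt ℂ k 0 ∧ ∀ᶠ t in 𝓝[≠] (0 : ℂ), g₂ t = k t)
    (hf₃' : ∃ c₃ : ℂ, Tendsto (fun t => t * f₃ t) (𝓝[≠] (0 : ℂ)) (𝓝 c₃))
    (hg₃' : ∃ c₃ : ℂ, Tendsto (fun t => t * g₃ t) (𝓝[≠] (0 : ℂ)) (𝓝 c₃)) :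
    ∀ᶠ t in 𝓝[≠] (0 : ℂ), f₁ t = g₁ t ∧ f₂ t = g₂ t ∧ f₃ t = g₃ t := by
  exact stmt_10_general (fun n _ => by norm_cast)
    (tendsto_self_mul_riccatiQ η hr.continuousAt) (tendsto_self_mul_riccatiQ η hrb.continuousAt)
    hf₁ hf₂ hf₃ hg₁ hg₂ hg₃ hsysf hsysg
    (tendsto_rescaledTriple_of_regular hf₁' hf₂' hf₃')
    (tendsto_rescaledTriple_of_regular hg₁' hg₂' hg₃')
end

section
/- Let ω₀ ∈ ℂ× satisfy ω₀·q(ω₀ t) = q̄(t) and ω₀·q̄(ω₀ t) = q(t) for all t in a punctured neighbourhood of 0. Let f₁, f₂, f₃ be analytic at 0, not all identically zero on a neighbourhood of 0, satisfying the coupled Riccati system on a punctured neighbourhood of 0 as well as the equivariance relations f₁(t) = ω₀·f₁(ω₀ t), f₂(t) = −ω₀·f₂(ω₀ t) and f₃(t) = −ω₀²·f₃(ω₀ t) for all t in a neighbourhood of 0. Then ω₀^{η+1} = 1, or ω₀^{η+1} = −1, or ω₀^{2(η+1)} = −1; in particular ω₀^{4(η+1)} = 1. -/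
open Filter Topology

/-!
Near `0` the triple `F = (f₁, f₂, f₃)` solves `F' = t⁻¹ D F + B(t) F` with `D = diag(η, η, 2η)` and
`B` continuous at `0`, the nonlinear terms being absorbed into `B`. Write `F = tⁿ h` with
`h 0 ≠ 0`. Comparing leading terms in the system gives `D (h 0) = n h 0`, and in the equivariance
relation `F(t) = M F(ω t)` gives `h 0 = ωⁿ M (h 0)`. As both `D` and `M` are diagonal, any nonzero
coordinate `i` of `h 0` yields `Dᵢ = n` and `Mᵢ ωⁿ = 1`.
-/

open Asymptotics

section LeadingCoefficient

variable {𝕜 E : Type*} [NontriviallyNormedField 𝕜] [NormedAddCommGroup E] [NormedSpace 𝕜 E]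
  {F R g h : 𝕜 → E} {n : ℕ} {ω : 𝕜}

lemma eq_zero_of_pow_smul_isLittleO_pow (hg : ContinuousAt g 0)
    (hsmall : (fun t => t ^ n • g t) =o[𝓝[≠] 0] fun t => t ^ n) : g 0 = 0 := by
  have hcancel : g =o[𝓝[≠] 0] fun _ => (1 : 𝕜) := by
    refine ((isBigO_refl (fun t : 𝕜 => (t ^ n)⁻¹) (𝓝[≠] 0)).smul_isLittleO hsmall).congr' ?_ ?_
    all_goals filter_upwards [self_mem_nhdsWithin] with t (ht : t ≠ 0)
    · exact inv_smul_smul₀ (pow_ne_zero n ht) (g t)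
    · exact inv_mul_cancel₀ (pow_ne_zero n ht)
  exact tendsto_nhds_unique (hg.tendsto.mono_left nhdsWithin_le_nhds)
    ((isLittleO_one_iff 𝕜).mp hcancel)

lemma smul_deriv_pow_smul {t : 𝕜} (hh : DifferentiableAt 𝕜 h t) :
    t • deriv (fun s => s ^ n • h s) t = t ^ n • ((n : 𝕜) • h t + t • deriv h t) := by
  rw [((hasDerivAt_pow n t).fun_smul hh.hasDerivAt).deriv]
  rcases n with _ | n
  · simp
  · simp only [Nat.add_sub_cancel, pow_succ]
    module

theorem residue_leadingCoeff_eq_smul [CompleteSpace E] {A : E →L[𝕜] E} (hh : AnalyticAt 𝕜 h 0)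
    (hF : ∀ᶠ t in 𝓝 0, F t = t ^ n • h t)
    (hode : ∀ᶠ t in 𝓝[≠] 0, deriv F t = t⁻¹ • A (F t) + R t) (hR : R =O[𝓝[≠] 0] F) :
    A (h 0) = (n : 𝕜) • h 0 := by
  have hremainder : (fun t => t • R t) =o[𝓝[≠] 0] fun t => t ^ n := by
    have hid : (fun t : 𝕜 => t) =o[𝓝[≠] 0] fun _ => (1 : 𝕜) :=
      (isLittleO_one_iff 𝕜).mpr nhdsWithin_le_nhds
    have hFO : F =O[𝓝[≠] 0] fun t => t ^ n := by
      have hhO : h =O[𝓝[≠] 0] fun _ => (1 : 𝕜) :=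
        (hh.continuousAt.tendsto.mono_left nhdsWithin_le_nhds).isBigO_one 𝕜
      refine ((isBigO_refl (fun t : 𝕜 => t ^ n) _).smul hhO).congr' ?_ (by simp)
      exact (hF.filter_mono nhdsWithin_le_nhds).mono fun t ht => ht.symm
    simpa only [smul_eq_mul, one_mul] using hid.smul_isBigO (hR.trans hFO)
  have hleading : (fun t => t • R t) =ᶠ[𝓝[≠] 0]
      fun t => t ^ n • ((n : 𝕜) • h t + t • deriv h t - A (h t)) := by
    filter_upwards [hode, hF.eventually_nhds.filter_mono nhdsWithin_le_nhds,
      hh.eventually_analyticAt.filter_mono nhdsWithin_le_nhds, self_mem_nhdsWithin]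
      with t hode_t hF_t hh_t (ht : t ≠ 0)
    have hderiv : deriv F t = deriv (fun s => s ^ n • h s) t := EventuallyEq.deriv_eq hF_t
    rw [eq_sub_of_add_eq' hode_t.symm, smul_sub, smul_inv_smul₀ ht, hderiv,
      smul_deriv_pow_smul hh_t.differentiableAt, hF_t.self_of_nhds, map_smul, ← smul_sub]
  have hcont : ContinuousAt (fun t => (n : 𝕜) • h t + t • deriv h t - A (h t)) 0 := by
    have := hh.continuousAt
    have := hh.deriv.continuousAt
    fun_prop
  have hzero := eq_zero_of_pow_smul_isLittleO_pow hcont (hremainder.congr' hleading .rfl)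
  rw [zero_smul, add_zero] at hzero
  exact (sub_eq_zero.mp hzero).symm

theorem leadingCoeff_eq_pow_smul_of_equivariant {M : E →L[𝕜] E} (hh : ContinuousAt h 0)
    (hF : ∀ᶠ t in 𝓝 0, F t = t ^ n • h t) (hM : ∀ᶠ t in 𝓝[≠] 0, F t = M (F (ω * t))) :
    h 0 = ω ^ n • M (h 0) := by
  have hdil : Tendsto (fun t => ω * t) (𝓝 0) (𝓝 0) := by
    simpa only [mul_zero] using (continuous_const_mul ω).tendsto 0
  have hleading : ∀ᶠ t in 𝓝[≠] 0, t ^ n • (h t - ω ^ n • M (h (ω * t))) = 0 := by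
    filter_upwards [hM, hF.filter_mono nhdsWithin_le_nhds,
      (hdil.eventually hF).filter_mono nhdsWithin_le_nhds] with t hM_t hF_t hF_ωt
    rw [hF_ωt, hF_t, map_smul, mul_pow] at hM_t
    rw [smul_sub, hM_t, smul_smul, mul_comm, sub_self]
  have hcont : ContinuousAt (fun t => h t - ω ^ n • M (h (ω * t))) 0 := by
    have hh_dil : ContinuousAt (fun t => h (ω * t)) 0 :=
      ContinuousAt.comp' (by rwa [mul_zero]) (by fun_prop)
    exact hh.sub ((M.continuous.continuousAt.comp' hh_dil).const_smul (ω ^ n))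
  have hzero := eq_zero_of_pow_smul_isLittleO_pow hcont
    ((isLittleO_zero _ _).congr' (hleading.mono fun t ht => ht.symm) .rfl)
  rw [mul_zero] at hzero
  exact sub_eq_zero.mp hzero

end LeadingCoefficient

theorem exists_exponent_of_diagonal_residue {𝕜 ι : Type*} [NontriviallyNormedField 𝕜]
    [CompleteSpace 𝕜] [Fintype ι] {d m : ι → 𝕜} {F R : 𝕜 → ι → 𝕜} {ω : 𝕜}
    (hF : AnalyticAt 𝕜 F 0) (hF_ne : ¬ ∀ᶠ t in 𝓝 0, F t = 0)
    (hode : ∀ᶠ t in 𝓝[≠] 0, deriv F t = t⁻¹ • (d * F t) + R t) (hR : R =O[𝓝[≠] 0] F)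
    (hm : ∀ᶠ t in 𝓝[≠] 0, F t = m * F (ω * t)) :
    ∃ (n : ℕ) (i : ι), d i = n ∧ m i * ω ^ n = 1 := by
  obtain ⟨n, h, hh, h_ne, hFh⟩ := hF.exists_eventuallyEq_pow_smul_nonzero_iff.mpr hF_ne
  simp only [sub_zero] at hFh
  obtain ⟨i, hi⟩ := Function.ne_iff.mp h_ne
  have heigen : d * h 0 = (n : 𝕜) • h 0 :=
    residue_leadingCoeff_eq_smul (A := .mul 𝕜 (ι → 𝕜) d) hh hFh hode hR
  have hequiv : h 0 = ω ^ n • (m * h 0) :=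
    leadingCoeff_eq_pow_smul_of_equivariant (M := .mul 𝕜 (ι → 𝕜) m) hh.continuousAt hFh hm
  refine ⟨n, i, mul_right_cancel₀ hi (congrFun heigen i), mul_right_cancel₀ hi ?_⟩
  calc m i * ω ^ n * h 0 i = (ω ^ n • (m * h 0)) i := by
        simp only [Pi.smul_apply, Pi.mul_apply, smul_eq_mul]
        ring
    _ = 1 * h 0 i := by rw [← hequiv, one_mul]

lemma isBigO_mulVec_of_tendsto {X R m n : Type*} [SeminormedRing R] [Fintype m] [Fintype n]
    {l : Filter X} {B : X → Matrix m n R} {B₀ : Matrix m n R} (hB : Tendsto B l (𝓝 B₀))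
    (v : X → n → R) : (fun x => (B x).mulVec (v x)) =O[l] v := by
  refine isBigO_pi.mpr fun i => IsBigO.fun_sum fun j _ => ?_
  have hentry : (fun x => B x i j) =O[l] fun _ => (1 : ℝ) :=
    (tendsto_pi_nhds.mp (tendsto_pi_nhds.mp hB i) j).isBigO_one ℝ
  have hcoord : (fun x => v x j) =O[l] v :=
    .of_bound' (.of_forall fun x => norm_le_pi_norm (v x) j)
  simpa only [one_mul, isBigO_norm_right] using hentry.mul hcoord.norm_right

/-- The regular part `B(t)` of the coupled Riccati system, written along a given solution as the
linear system `F' = t⁻¹ diag(η, η, 2η) F + B(t) F` for `F = (f₁, f₂, f₃)`. Each quadratic or cubic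
term is a coefficient depending on `f₁, f₂` times a coordinate of `F`. -/
noncomputable def riccatiRegularPart (r rb f₁ f₂ : ℂ → ℂ) (t : ℂ) : Matrix (Fin 3) (Fin 3) ℂ :=
  !![-(f₁ t + r t + rb t) / 2, -(3 * f₂ t + r t - rb t) / 2, 0;
    -(r t - rb t) / 2, -(4 * f₁ t + r t + rb t) / 2, 1;
    0, -(f₁ t ^ 2 - f₂ t ^ 2) / 2, -(f₁ t + r t + rb t)]

lemma continuousAt_riccatiRegularPart {r rb f₁ f₂ : ℂ → ℂ} {z : ℂ} (hr : ContinuousAt r z)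
    (hrb : ContinuousAt rb z) (h₁ : ContinuousAt f₁ z) (h₂ : ContinuousAt f₂ z) :
    ContinuousAt (riccatiRegularPart r rb f₁ f₂) z := by
  refine continuousAt_pi.mpr fun i => continuousAt_pi.mpr fun j => ?_
  fin_cases i <;> fin_cases j <;>
    simp only [riccatiRegularPart, Matrix.of_apply, Matrix.cons_val', Matrix.cons_val,
      Matrix.cons_val_fin_one, Fin.reduceFinMk, Fin.zero_eta, Fin.mk_one] <;>
    fun_prop

theorem CoupledRiccatiSystem.deriv_eq {η : ℕ} {r rb f₁ f₂ f₃ : ℂ → ℂ}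
    (hsys : CoupledRiccatiSystem η r rb f₁ f₂ f₃)
    (hF : ∀ᶠ t in 𝓝[≠] 0, DifferentiableAt ℂ (fun s => ![f₁ s, f₂ s, f₃ s]) t) :
    ∀ᶠ t in 𝓝[≠] 0, deriv (fun s => ![f₁ s, f₂ s, f₃ s]) t =
      t⁻¹ • (![(η : ℂ), η, 2 * η] * ![f₁ t, f₂ t, f₃ t]) +
        (riccatiRegularPart r rb f₁ f₂ t).mulVec ![f₁ t, f₂ t, f₃ t] := by
  filter_upwards [hsys, hF] with t ⟨eq₁, eq₂, eq₃⟩ hF_t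
  simp only [riccatiQ, div_eq_inv_mul] at eq₁ eq₂ eq₃
  rw [deriv_pi (differentiableAt_pi.mp hF_t)]
  ext i
  fin_cases i <;>
    simp only [riccatiRegularPart, Matrix.mulVec_cons, Matrix.mulVec_empty, Pi.add_apply,
      Pi.zero_apply, Pi.mul_apply, Pi.smul_apply, Function.comp_apply, smul_eq_mul,
      Matrix.head_cons, Matrix.tail_cons, Matrix.cons_val, Fin.reduceFinMk, Fin.zero_eta,
      Fin.mk_one]
  · linear_combination eq₁ / 2
  · linear_combination eq₂ / 2
  · linear_combination eq₃ / 2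

theorem stmt_11_general {η : ℕ} {r rb f₁ f₂ f₃ : ℂ → ℂ} {ω a b c : ℂ}
    (hr : ContinuousAt r 0) (hrb : ContinuousAt rb 0)
    (h₁ : AnalyticAt ℂ f₁ 0) (h₂ : AnalyticAt ℂ f₂ 0) (h₃ : AnalyticAt ℂ f₃ 0)
    (hnz : ¬ ∀ᶠ t in 𝓝 (0 : ℂ), f₁ t = 0 ∧ f₂ t = 0 ∧ f₃ t = 0)
    (hsys : CoupledRiccatiSystem η r rb f₁ f₂ f₃)
    (he₁ : ∀ᶠ t in 𝓝 (0 : ℂ), f₁ t = a * f₁ (ω * t))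
    (he₂ : ∀ᶠ t in 𝓝 (0 : ℂ), f₂ t = b * f₂ (ω * t))
    (he₃ : ∀ᶠ t in 𝓝 (0 : ℂ), f₃ t = c * f₃ (ω * t)) :
    a * ω ^ η = 1 ∨ b * ω ^ η = 1 ∨ c * ω ^ (2 * η) = 1 := by
  have hF : AnalyticAt ℂ (fun t => ![f₁ t, f₂ t, f₃ t]) 0 := by
    refine analyticAt_pi_iff.mpr fun i => ?_
    fin_cases i
    exacts [h₁, h₂, h₃]
  have hode := hsys.deriv_eq <| (hF.eventually_analyticAt.mono fun t ht =>
    ht.differentiableAt).filter_mono nhdsWithin_le_nhds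
  have hB := continuousAt_riccatiRegularPart hr hrb h₁.continuousAt h₂.continuousAt
  have hR := isBigO_mulVec_of_tendsto (hB.tendsto.mono_left (nhdsWithin_le_nhds (s := {0}ᶜ)))
    fun t => ![f₁ t, f₂ t, f₃ t]
  have hm : ∀ᶠ t in 𝓝[≠] 0, ![f₁ t, f₂ t, f₃ t] =
      ![a, b, c] * ![f₁ (ω * t), f₂ (ω * t), f₃ (ω * t)] := by
    filter_upwards [(he₁.and (he₂.and he₃)).filter_mono nhdsWithin_le_nhds] with t ⟨e₁, e₂, e₃⟩
    ext i
    fin_cases i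
    exacts [e₁, e₂, e₃]
  obtain ⟨n, i, hn, hω⟩ :=
    exists_exponent_of_diagonal_residue hF (by simpa using hnz) hode hR hm
  fin_cases i
  · obtain rfl : η = n := Nat.cast_injective (R := ℂ) hn
    exact .inl hω
  · obtain rfl : η = n := Nat.cast_injective (R := ℂ) hn
    exact .inr (.inl hω)
  · obtain rfl : 2 * η = n := by exact_mod_cast (show 2 * (η : ℂ) = n from hn)
    exact .inr (.inr hω)

lemma pow_succ_eq_one_or_neg_one_of_weight {R : Type*} [CommRing R] {x : R} {k : ℕ}
    (h : x * x ^ k = 1 ∨ -x * x ^ k = 1 ∨ -x ^ 2 * x ^ (2 * k) = 1) :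
    x ^ (k + 1) = 1 ∨ x ^ (k + 1) = -1 ∨ x ^ (2 * (k + 1)) = -1 := by
  refine h.imp (fun h => ?_) (Or.imp (fun h => ?_) fun h => ?_)
  · linear_combination h
  · linear_combination -h
  · linear_combination -h

lemma pow_four_mul_eq_one {M : Type*} [Monoid M] [HasDistribNeg M] {x : M} {k : ℕ}
    (h : x ^ k = 1 ∨ x ^ k = -1 ∨ x ^ (2 * k) = -1) : x ^ (4 * k) = 1 := by
  rcases h with h | h | h
  · rw [pow_mul', h, one_pow]
  · rw [pow_mul', h, Even.neg_one_pow (by decide)]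
  · rw [show 4 * k = 2 * k * 2 by ring, pow_mul, h, neg_one_sq]

/-- constraints on ω₀ for the existence of a nonzero analytic,
equivariant solution of the coupled Riccati system. -/
theorem stmt_11 (η : ℕ) (r rb f₁ f₂ f₃ : ℂ → ℂ) (ω₀ : ℂ) (hω₀ : ω₀ ≠ 0)
    (hr : AnalyticAt ℂ r 0) (hrb : AnalyticAt ℂ rb 0)
    (hq : ∀ᶠ t in 𝓝[≠] (0 : ℂ), ω₀ * riccatiQ η r (ω₀ * t) = riccatiQ η rb t)
    (hqb : ∀ᶠ t in 𝓝[≠] (0 : ℂ), ω₀ * riccatiQ η rb (ω₀ * t) = riccatiQ η r t)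
    (h₁ : AnalyticAt ℂ f₁ 0) (h₂ : AnalyticAt ℂ f₂ 0) (h₃ : AnalyticAt ℂ f₃ 0)
    (hnz : ¬ ∀ᶠ t in 𝓝 (0 : ℂ), f₁ t = 0 ∧ f₂ t = 0 ∧ f₃ t = 0)
    (hsys : CoupledRiccatiSystem η r rb f₁ f₂ f₃)
    (he₁ : ∀ᶠ t in 𝓝 (0 : ℂ), f₁ t = ω₀ * f₁ (ω₀ * t))
    (he₂ : ∀ᶠ t in 𝓝 (0 : ℂ), f₂ t = -(ω₀ * f₂ (ω₀ * t)))
    (he₃ : ∀ᶠ t in 𝓝 (0 : ℂ), f₃ t = -(ω₀ ^ 2 * f₃ (ω₀ * t))) :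
    (ω₀ ^ (η + 1) = 1 ∨ ω₀ ^ (η + 1) = -1 ∨ ω₀ ^ (2 * (η + 1)) = -1) ∧
      ω₀ ^ (4 * (η + 1)) = 1 := by
  have hω := pow_succ_eq_one_or_neg_one_of_weight <| stmt_11_general hr.continuousAt
    hrb.continuousAt h₁ h₂ h₃ hnz hsys he₁ (b := -ω₀) (c := -ω₀ ^ 2)
    (by simpa only [neg_mul] using he₂) (by simpa only [neg_mul] using he₃)
  exact ⟨hω, pow_four_mul_eq_one hω⟩
end

section
/- Let A be a finite-type generalized Cartan-type integer matrix on a finite index set I and let ν be a diagram automorphism of A. For every orbit 𝒪 ⊆ I of ν, the integer Σ_{i∈𝒪} A(i,j) does not depend on the choice of j ∈ 𝒪; moreover, writing ℓ_𝒪 := 3 − Σ_{i∈𝒪} A(i,j) for any j ∈ 𝒪, one has ℓ_𝒪 ∈ {1, 2}, and consequently ℓ_𝒪 · Σ_{i∈𝒪} A(i,j) = 2. -/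
/-!
Let `d` be positive weights making `(d i * A i j)` positive definite, and evaluate the quadratic
form at the vector with entries `(d i)⁻¹` on a nonempty finite set `O`. The factors `d i` cancel,
leaving a positive combination of the column sums over `O`, so one of these is positive. On an orbit
the column sums all agree, hence they are positive; they are at most the diagonal entry `2`, so they
equal `1` or `2`. Any monoid acting on the indices and preserving `A` can replace the powers of `ν`:
since `A i j = 2` only for `i = j`, its elements act injectively, hence permute each finite orbit.
-/

section ColumnSums

variable {α β M : Type*} {F : α → α → β} {s : Finset α}

theorem injective_of_apply_apply_eq {c : β} {f : α → α} (hF : ∀ i j, F i j = c ↔ i = j)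
    (hf : ∀ i j, F (f i) (f j) = F i j) : Function.Injective f := fun i j hij =>
  (hF i j).1 <| (hf i j).symm.trans <| (hF _ _).2 hij

theorem sum_apply_map_right [AddCommMonoid β] {f : α → α} (hs : Set.MapsTo f s s)
    (hinj : Set.InjOn f s) {j : α} (hf : ∀ i ∈ s, F (f i) (f j) = F i j) :
    ∑ i ∈ s, F i (f j) = ∑ i ∈ s, F i j :=
  have hsurj : Set.SurjOn f s s := s.surjOn_of_injOn_of_card_le f hs hinj le_rfl
  (Finset.sum_nbij f hs hinj hsurj fun i hi => (hf i hi).symm).symm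

theorem apply_powers_smul_smul [Monoid M] [MulAction M α] {m : M}
    (hm : ∀ i j, F (m • i) (m • j) = F i j) (p : Submonoid.powers m) (i j : α) :
    F (p • i) (p • j) = F i j := by
  obtain ⟨_, k, rfl⟩ := p
  change F (m ^ k • i) (m ^ k • j) = F i j
  induction k with
  | zero => simp only [pow_zero, one_smul]
  | succ k ih => rw [pow_succ', mul_smul, mul_smul, hm, ih]

theorem mem_orbit_powers_iff [Monoid M] [MulAction M α] {m : M} {i j : α} :
    j ∈ MulAction.orbit (Submonoid.powers m) i ↔ ∃ k : ℕ, m ^ k • i = j := by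
  simp [MulAction.mem_orbit_iff, Submonoid.mem_powers_iff, Submonoid.smul_def]

theorem sum_apply_eq_of_mem_orbit [AddCommMonoid β] [Monoid M] [MulAction M α] {i₀ j : α}
    (hs : (s : Set α) = MulAction.orbit M i₀) (hinj : ∀ m : M, Set.InjOn (m • ·) (s : Set α))
    (hM : ∀ (m : M) i j, F (m • i) (m • j) = F i j) (hj : j ∈ s) :
    ∑ i ∈ s, F i j = ∑ i ∈ s, F i i₀ := by
  obtain ⟨m, rfl⟩ : j ∈ MulAction.orbit M i₀ := hs ▸ hj
  have hmaps : Set.MapsTo (m • ·) (s : Set α) s := hs ▸ MulAction.mapsTo_smul_orbit m i₀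
  exact sum_apply_map_right hmaps (hinj m) fun i _ => hM m i i₀

theorem sum_le_apply_of_forall_ne_nonpos [AddCommMonoid β] [Preorder β] [AddLeftMono β]
    {f : α → β} {j : α} (hj : j ∈ s) (hf : ∀ i ∈ s, i ≠ j → f i ≤ 0) :
    ∑ i ∈ s, f i ≤ f j := by
  simpa using Finset.sum_le_sum_of_subset_of_nonpos' (Finset.singleton_subset_iff.2 hj)
    fun i hi hij => hf i hi (Finset.notMem_singleton.1 hij)

end ColumnSums

theorem exists_sum_col_pos_of_posDef {n K : Type*} [Fintype n] [Nonempty n] [Field K]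
    [LinearOrder K] [IsStrictOrderedRing K] [StarRing K] [TrivialStar K] {A : n → n → K} {d : n → K}
    (hd : ∀ i, 0 < d i) (hA : (Matrix.of fun i j => d i * A i j).PosDef) :
    ∃ j, 0 < ∑ i, A i j := by
  have hd_inv_ne : d⁻¹ ≠ 0 := fun h =>
    (inv_pos.2 (hd (Classical.arbitrary n))).ne' (congrFun h _)
  have hform : star d⁻¹ ⬝ᵥ Matrix.mulVec (Matrix.of fun i j => d i * A i j) d⁻¹ =
      ∑ j, (∑ i, A i j) * (d j)⁻¹ := by
    simp only [dotProduct, Matrix.mulVec, Matrix.of_apply, star_trivial, Pi.inv_apply, mul_assoc,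
      ← Finset.mul_sum, inv_mul_cancel_left₀ (hd _).ne', Finset.sum_mul]
    exact Finset.sum_comm
  have hsum : 0 < ∑ j, (∑ i, A i j) * (d j)⁻¹ := hform ▸ hA.dotProduct_mulVec_pos hd_inv_ne
  obtain ⟨j, -, hj⟩ := Finset.exists_lt_of_sum_lt (Finset.sum_const_zero.trans_lt hsum)
  exact ⟨j, pos_of_mul_pos_left hj (inv_pos.2 (hd j)).le⟩

theorem stmt_12_general {I M : Type*} [Monoid M] [MulAction M I] {A : I → I → ℤ}
    (hdiag : ∀ i, A i i = 2) (hoff : ∀ i j, i ≠ j → A i j ≤ 0)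
    (hfin : ∃ d : I → ℝ, (∀ i, 0 < d i) ∧ (Matrix.of fun i j => d i * (A i j : ℝ)).PosDef)
    (hM : ∀ (m : M) i j, A (m • i) (m • j) = A i j)
    {O : Finset I} {i₀ : I} (hO : (O : Set I) = MulAction.orbit M i₀) :
    (∀ j ∈ O, ∀ j' ∈ O, ∑ i ∈ O, A i j = ∑ i ∈ O, A i j') ∧
    ∀ j ∈ O, (3 - ∑ i ∈ O, A i j = 1 ∨ 3 - ∑ i ∈ O, A i j = 2) ∧
      (3 - ∑ i ∈ O, A i j) * (∑ i ∈ O, A i j) = 2 := by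
  have htwo : ∀ i j, A i j = 2 ↔ i = j := fun i j =>
    ⟨fun h => by_contra fun hij => absurd (hoff i j hij) (by simp [h]), fun h => h ▸ hdiag i⟩
  have hconst : ∀ j ∈ O, ∀ j' ∈ O, ∑ i ∈ O, A i j = ∑ i ∈ O, A i j' := fun j hj j' hj' =>
    have hinj := fun m => (injective_of_apply_apply_eq htwo (hM m)).injOn
    (sum_apply_eq_of_mem_orbit hO hinj hM hj).trans (sum_apply_eq_of_mem_orbit hO hinj hM hj').symm
  refine ⟨hconst, fun j hj => ?_⟩
  have hle : ∑ i ∈ O, A i j ≤ 2 :=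
    hdiag j ▸ sum_le_apply_of_forall_ne_nonpos hj fun i _ => hoff i j
  have hpos : 0 < ∑ i ∈ O, A i j := by
    obtain ⟨d, hd, hA⟩ := hfin
    have : Nonempty O := ⟨j, hj⟩
    obtain ⟨⟨j', hj'⟩, hsum⟩ := exists_sum_col_pos_of_posDef (A := fun i j : O => (A i j : ℝ))
      (fun i => hd i) (hA.submatrix Subtype.val_injective)
    rw [hconst j hj j' hj', ← Finset.sum_coe_sort]
    exact_mod_cast hsum
  obtain h | h : ∑ i ∈ O, A i j = 1 ∨ ∑ i ∈ O, A i j = 2 := by lia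
  all_goals simp [h]

/-- for a finite-type generalized Cartan matrix with a diagram
automorphism ν, the column sums over a ν-orbit are independent of the column
chosen in the orbit, the associated integer ℓ = 3 − Σ lies in {1, 2}, and
ℓ · Σ = 2. -/
theorem stmt_12 {I : Type*} [Fintype I] [DecidableEq I]
    (A : I → I → ℤ)
    (hdiag : ∀ i, A i i = 2)
    (hoff : ∀ i j, i ≠ j → A i j ≤ 0)
    (hfin : ∃ d : I → ℝ, (∀ i, 0 < d i) ∧ (∀ i j, d i * (A i j : ℝ) = d j * (A j i : ℝ)) ∧
      Matrix.PosDef (Matrix.of fun i j => d i * (A i j : ℝ)))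
    (ν : Equiv.Perm I)
    (hν : ∀ i j, A (ν i) (ν j) = A i j)
    (O : Finset I) (i₀ : I)
    (hO : ∀ i, i ∈ O ↔ ∃ k : ℕ, (ν ^ k) i₀ = i) :
    (∀ j ∈ O, ∀ j' ∈ O, ∑ i ∈ O, A i j = ∑ i ∈ O, A i j') ∧
    ∀ j ∈ O, (3 - ∑ i ∈ O, A i j = 1 ∨ 3 - ∑ i ∈ O, A i j = 2) ∧
      (3 - ∑ i ∈ O, A i j) * (∑ i ∈ O, A i j) = 2 := by
  obtain ⟨d, hd, -, hA⟩ := hfin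
  exact stmt_12_general hdiag hoff ⟨d, hd, hA⟩ (apply_powers_smul_smul (m := ν) hν)
    (Set.ext fun i => (hO i).trans (mem_orbit_powers_iff (m := ν) (i := i₀)).symm)
end
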